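/- arXiv:1903.09743 — 2 statements merged into one kernel-verified Lean document; each statement's English description precedes it below -/
import Mathlib

section
/- Let m ≥ 1, let c₁,…,cₘ be real numbers, and let b₁,…,bₘ : [0,∞) → ℝ be differentiable functions with bᵢ(0) ≥ cᵢ for all i. Assume that for every t ≥ 0 and every i, if bᵢ(t) = cᵢ and bⱼ(t) ≥ cⱼ for all j ∈ {1,…,m}, then bᵢ′(t) > 0. Then bᵢ(t) ≥ cᵢ for all t ≥ 0 and all i. -/
/-!
By continuous induction on `[0, T]`, it suffices that whenever all the inequalities `cᵢ ≤ bᵢ` hold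
at a time `x`, they persist for a short time after `x`. A strict inequality persists by continuity,
and an equality `bᵢ(x) = cᵢ` turns into `cᵢ < bᵢ` because `bᵢ` has positive right derivative there.
As there are finitely many indices, a common short time works for all of them.
-/

open Filter Set Topology

theorem pi_image_le_of_eventually_le_nhdsGT_of_eq {ι α β : Type*} [Finite ι]
    [ConditionallyCompleteLinearOrder α] [TopologicalSpace α] [OrderTopology α]
    [DenselyOrdered α] [LinearOrder β] [TopologicalSpace β] [OrderClosedTopology β]
    {f g : α → ι → β} {a b : α} (hf : ContinuousOn f (Icc a b)) (hg : ContinuousOn g (Icc a b))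
    (ha : f a ≤ g a)
    (htouch : ∀ x ∈ Ico a b, f x ≤ g x → ∀ i, f x i = g x i → ∀ᶠ y in 𝓝[>] x, f y i ≤ g y i) :
    ∀ x ∈ Icc a b, f x ≤ g x := by
  have hclosed : IsClosed ({x | f x ≤ g x} ∩ Icc a b) := by
    rw [inter_comm]
    exact isClosed_Icc.isClosed_le hf hg
  refine hclosed.Icc_subset_of_forall_mem_nhdsWithin ha fun x ⟨hx, hxab⟩ ↦ ?_
  change ∀ᶠ y in 𝓝[>] x, ∀ i, f y i ≤ g y i
  refine eventually_all.2 fun i ↦ ?_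
  rcases (hx i).lt_or_eq with hlt | hxi
  · have hIcc : Icc a b ∈ 𝓝[>] x := Icc_mem_nhdsGT_of_mem hxab
    have tendsto_right {h : α → ι → β} (hh : ContinuousOn h (Icc a b)) :
        Tendsto (h · i) (𝓝[>] x) (𝓝 (h x i)) :=
      (continuousOn_pi.1 hh i x (Ico_subset_Icc_self hxab)).mono_of_mem_nhdsWithin hIcc
    exact ((tendsto_right hf).eventually_lt (tendsto_right hg) hlt).mono fun _ ↦ le_of_lt
  · exact htouch x hxab hx i hxi

theorem eventually_nhdsGT_lt_of_hasDerivWithinAt_pos {𝕜 : Type*} [NontriviallyNormedField 𝕜]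
    [LinearOrder 𝕜] [IsStrictOrderedRing 𝕜] [OrderClosedTopology 𝕜] {f : 𝕜 → 𝕜} {f' x : 𝕜}
    (hf : HasDerivWithinAt f f' (Ioi x) x) (hf' : 0 < f') : ∀ᶠ y in 𝓝[>] x, f x < f y := by
  have hslope : ∀ᶠ y in 𝓝[>] x, 0 < slope f x y :=
    ((hasDerivWithinAt_iff_tendsto_slope' self_notMem_Ioi).1 hf).eventually_const_lt hf'
  filter_upwards [hslope, self_mem_nhdsWithin] with y hy hxy
  exact (slope_pos_iff_of_le (le_of_lt hxy)).1 hy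

theorem scalar_distributed_invariance_general {ι : Type*} [Finite ι] (c : ι → ℝ)
    (b b' : ι → ℝ → ℝ) (hcont : ∀ i, ContinuousOn (b i) (Ici 0))
    (hderiv : ∀ i, ∀ t, 0 ≤ t → HasDerivWithinAt (b i) (b' i t) (Ioi t) t)
    (h0 : ∀ i, c i ≤ b i 0)
    (hbound : ∀ t, 0 ≤ t → ∀ i, b i t = c i → (∀ j, c j ≤ b j t) → 0 < b' i t) :
    ∀ t, 0 ≤ t → ∀ i, c i ≤ b i t := by
  intro T hT
  have hcontT : ContinuousOn (fun t i ↦ b i t) (Icc 0 T) :=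
    continuousOn_pi.2 fun i ↦ (hcont i).mono Icc_subset_Ici_self
  refine pi_image_le_of_eventually_le_nhdsGT_of_eq (f := fun _ ↦ c) continuousOn_const hcontT h0
    (fun t ⟨ht, _⟩ hle i hti ↦ ?_) T (right_mem_Icc.2 hT)
  have hpos : 0 < b' i t := hbound t ht i hti.symm hle
  filter_upwards [eventually_nhdsGT_lt_of_hasDerivWithinAt_pos (hderiv i t ht) hpos] with s hs
  exact hti.trans_le hs.le

/-- **Scalar invariance lemma underlying the distributed barrier-certificate theorem.**
Given `m ≥ 1` differentiable functions `bᵢ : [0,∞) → ℝ` (with derivatives `b'ᵢ`) and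
thresholds `cᵢ` such that `bᵢ(0) ≥ cᵢ`, if whenever `bᵢ(t) = cᵢ` while `bⱼ(t) ≥ cⱼ` for
all `j` one has `bᵢ'(t) > 0`, then `bᵢ(t) ≥ cᵢ` for all `t ≥ 0` and all `i`. -/
theorem scalar_distributed_invariance
    {m : ℕ} (hm : 1 ≤ m) (c : Fin m → ℝ)
    (b b' : Fin m → ℝ → ℝ)
    (hderiv : ∀ i, ∀ t, 0 ≤ t → HasDerivAt (b i) (b' i t) t)
    (h0 : ∀ i, c i ≤ b i 0)
    (hbound : ∀ t, 0 ≤ t → ∀ i, b i t = c i → (∀ j, c j ≤ b j t) → 0 < b' i t) :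
    ∀ t, 0 ≤ t → ∀ i, c i ≤ b i t :=
  scalar_distributed_invariance_general c b b'
    (fun i t ht ↦ (hderiv i t ht).continuousAt.continuousWithinAt)
    (fun i t ht ↦ (hderiv i t ht).hasDerivWithinAt) h0 hbound
end

section
/- (Putinar's Positivstellensatz.) Let k₁,…,kₘ ∈ ℝ[x₁,…,xₙ] be polynomials, set k₀ = 1, and let 𝒦 = {x ∈ ℝⁿ : k₁(x) ≥ 0, …, kₘ(x) ≥ 0} be compact. Suppose there exist sum-of-squares polynomials σ₀,…,σₘ such that μ := Σ_{j=0}^m σⱼ kⱼ has compact superlevel set {x ∈ ℝⁿ : μ(x) ≥ 0}. Then every polynomial p ∈ ℝ[x₁,…,xₙ] with p(x) > 0 for all x ∈ 𝒦 admits a representation p = Σ_{j=0}^m σ̃ⱼ kⱼ for some sum-of-squares polynomials σ̃₀,…,σ̃ₘ. -/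
open MvPolynomial

/-- A multivariate real polynomial is a sum of squares (SOS) if it is a finite sum of
squares of polynomials. -/
def IsSOS {n : ℕ} (p : MvPolynomial (Fin n) ℝ) : Prop :=
  ∃ (s : ℕ) (h : Fin s → MvPolynomial (Fin n) ℝ), p = ∑ i, (h i) ^ 2

/-! Let `M` be the quadratic module generated by the `kⱼ`. If `M` is archimedean, then a quadratic
module that contains `M` and is maximal among those without `-1` is the preimage of `[0, ∞)` under a
homomorphism `ℝ[x] → ℝ`, that is, under evaluation at a point of `𝒦`. As `p` is positive on `𝒦`,
this gives a sum of squares `g` with `g p - 1 ∈ M`, from which one passes to `p ∈ M`.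

That `M` is archimedean follows from Wörmann's argument for the preordering `T = Σ² + Σ² μ ⊆ M`. Put
`g = ∑ xᵢ²`. For large `N` the inequalities `μ ≥ 0` and `g ≥ N` have no common solution, so
`-1 ∈ T + T (g - N)`; since `T + T (N - g)` is archimedean, this yields `N' - g ∈ T` for some `N'`.

The existence of such an identity for `-1` is the weak Positivstellensatz: otherwise the
inequalities have a solution in an ordered field, which embeds into a real closed field `L`, and the
solution has to be moved from `L` to `ℝ` (Tarski's transfer). This is done one coordinate at a time.
A coordinate `ξ` has over a real closed `R` the same polynomial signs as some germ in an ultrapower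
of `R`; so `L` and the ultrapower contain a common real closed field in which `ξ` is a constant. -/

/-! ### Quadratic modules -/

/-- A quadratic module of a commutative ring: an additive submonoid that contains `1` and is
stable under multiplication by squares. -/
structure QuadraticModule (A : Type*) [CommRing A] extends AddSubmonoid A where
  one_mem' : (1 : A) ∈ carrier
  sq_mul_mem' : ∀ (a : A) {m : A}, m ∈ carrier → a ^ 2 * m ∈ carrier

namespace QuadraticModule

section CommRing

variable {A : Type*} [CommRing A]

instance : SetLike (QuadraticModule A) A where
  coe M := M.carrier
  coe_injective M N h := by
    cases M
    cases N
    congr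
    exact SetLike.coe_injective h

instance : PartialOrder (QuadraticModule A) := .ofSetLike (QuadraticModule A) A

instance : AddSubmonoidClass (QuadraticModule A) A where
  add_mem {M} := M.add_mem'
  zero_mem M := M.zero_mem'

instance : OneMemClass (QuadraticModule A) A where
  one_mem M := M.one_mem'

variable (M : QuadraticModule A)

variable {M} in
lemma sq_mul_mem (a : A) {m : A} (hm : m ∈ M) : a ^ 2 * m ∈ M := M.sq_mul_mem' a hm

lemma sq_mem (a : A) : a ^ 2 ∈ M := by
  simpa using sq_mul_mem a (one_mem M)

variable {M} in
lemma mul_mem_of_isSumSq {s m : A} (hs : IsSumSq s) (hm : m ∈ M) : s * m ∈ M := by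
  induction hs with
  | zero => simp
  | sq_add a _ ih =>
    rw [add_mul, ← pow_two]
    exact add_mem (sq_mul_mem a hm) ih

lemma mem_of_isSumSq {s : A} (hs : IsSumSq s) : s ∈ M := by
  simpa using mul_mem_of_isSumSq hs (one_mem M)

/-- The quadratic module generated by `M` and `p`. -/
def adjoin (p : A) : QuadraticModule A where
  carrier := {x | ∃ q ∈ M, ∃ s, IsSumSq s ∧ x = q + s * p}
  zero_mem' := ⟨0, zero_mem M, 0, .zero, by simp⟩
  one_mem' := ⟨1, one_mem M, 0, .zero, by simp⟩
  add_mem' := by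
    rintro _ _ ⟨q, hq, s, hs, rfl⟩ ⟨q', hq', s', hs', rfl⟩
    exact ⟨q + q', add_mem hq hq', s + s', hs.add hs', by ring⟩
  sq_mul_mem' := by
    rintro a _ ⟨q, hq, s, hs, rfl⟩
    exact ⟨a ^ 2 * q, sq_mul_mem a hq, a ^ 2 * s, (IsSquare.sq a).isSumSq.mul hs, by ring⟩

lemma le_adjoin (p : A) : M ≤ M.adjoin p :=
  fun x hx => ⟨x, hx, 0, .zero, by simp⟩

lemma mem_adjoin_self (p : A) : p ∈ M.adjoin p :=
  ⟨0, zero_mem M, 1, IsSquare.one.isSumSq, by simp⟩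

/-- The quadratic module generated by a finite family. -/
def span {ι : Type*} [Fintype ι] (k : ι → A) : QuadraticModule A where
  carrier := {x | ∃ (s₀ : A) (s : ι → A), IsSumSq s₀ ∧ (∀ i, IsSumSq (s i)) ∧
    x = s₀ + ∑ i, s i * k i}
  zero_mem' := ⟨0, 0, .zero, fun _ => .zero, by simp⟩
  one_mem' := ⟨1, 0, IsSquare.one.isSumSq, fun _ => .zero, by simp⟩
  add_mem' := by
    rintro _ _ ⟨s₀, s, hs₀, hs, rfl⟩ ⟨t₀, t, ht₀, ht, rfl⟩
    refine ⟨s₀ + t₀, s + t, hs₀.add ht₀, fun i => (hs i).add (ht i), ?_⟩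
    simp only [Pi.add_apply, add_mul, Finset.sum_add_distrib]
    ring
  sq_mul_mem' := by
    rintro a _ ⟨s₀, s, hs₀, hs, rfl⟩
    have ha : IsSumSq (a ^ 2) := (IsSquare.sq a).isSumSq
    refine ⟨a ^ 2 * s₀, fun i => a ^ 2 * s i, ha.mul hs₀, fun i => ha.mul (hs i), ?_⟩
    simp only [mul_add, Finset.mul_sum, mul_assoc]

lemma mem_span_self {ι : Type*} [Fintype ι] (k : ι → A) (i : ι) : k i ∈ span k := by
  classical
  refine ⟨0, Pi.single i 1, .zero, fun j => ?_, by simp [Pi.single_apply]⟩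
  obtain rfl | hij := eq_or_ne j i
  · simp
  · simp [hij]

lemma exists_le_maximal (hM : (-1 : A) ∉ M) :
    ∃ Q, M ≤ Q ∧ Maximal (fun Q : QuadraticModule A => (-1 : A) ∉ Q) Q := by
  refine zorn_le_nonempty₀ {Q : QuadraticModule A | (-1 : A) ∉ Q} (fun c hc hchain P hP => ?_) M hM
  have directed {x y : A} (hx : ∃ Q ∈ c, x ∈ Q) (hy : ∃ Q ∈ c, y ∈ Q) :
      ∃ Q ∈ c, x ∈ Q ∧ y ∈ Q := by
    obtain ⟨Q, hQ, hxQ⟩ := hx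
    obtain ⟨R, hR, hyR⟩ := hy
    rcases hchain.total hQ hR with h | h
    exacts [⟨R, hR, h hxQ, hyR⟩, ⟨Q, hQ, hxQ, h hyR⟩]
  let U : QuadraticModule A :=
    { carrier := {x | ∃ Q ∈ c, x ∈ Q}
      zero_mem' := ⟨P, hP, zero_mem P⟩
      one_mem' := ⟨P, hP, one_mem P⟩
      add_mem' := fun hx hy =>
        let ⟨Q, hQ, hxQ, hyQ⟩ := directed hx hy
        ⟨Q, hQ, add_mem hxQ hyQ⟩
      sq_mul_mem' := fun a _ ⟨Q, hQ, hxQ⟩ => ⟨Q, hQ, sq_mul_mem a hxQ⟩ }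
  exact ⟨U, fun ⟨Q, hQ, hmem⟩ => hc hQ hmem, fun Q hQ _ hx => ⟨Q, hQ, hx⟩⟩

end CommRing

section Real

variable {A : Type*} [CommRing A] [Algebra ℝ A] {M : QuadraticModule A}

lemma algebraMap_mul_mem {r : ℝ} (hr : 0 ≤ r) {m : A} (hm : m ∈ M) : algebraMap ℝ A r * m ∈ M := by
  have := sq_mul_mem (algebraMap ℝ A √r) hm
  rwa [← map_pow, Real.sq_sqrt hr] at this

variable (M) in
lemma algebraMap_mem {r : ℝ} (hr : 0 ≤ r) : algebraMap ℝ A r ∈ M := by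
  simpa using algebraMap_mul_mem hr (one_mem M)

lemma mem_of_algebraMap_mul_mem {r : ℝ} (hr : 0 < r) {m : A} (hm : algebraMap ℝ A r * m ∈ M) :
    m ∈ M := by
  have := algebraMap_mul_mem (inv_nonneg.2 hr.le) hm
  rwa [← mul_assoc, ← map_mul, inv_mul_cancel₀ hr.ne', map_one, one_mul] at this

lemma nonneg_of_algebraMap_mem (hM : (-1 : A) ∉ M) {r : ℝ} (hr : algebraMap ℝ A r ∈ M) : 0 ≤ r := by
  by_contra! hlt
  exact hM (mem_of_algebraMap_mul_mem (neg_pos.2 hlt) (by simpa using hr))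

lemma algebraMap_sub_mem_of_le {r s : ℝ} (hrs : r ≤ s) {a : A} (ha : algebraMap ℝ A r - a ∈ M) :
    algebraMap ℝ A s - a ∈ M := by
  convert add_mem ha (algebraMap_mem M (sub_nonneg.2 hrs)) using 1
  rw [map_sub]
  ring

variable (M) in
/-- `M.AbsLE a r` says that `|a| ≤ r` in the preorder of `A` with nonnegative cone `M`. -/
def AbsLE (a : A) (r : ℝ) : Prop := algebraMap ℝ A r - a ∈ M ∧ algebraMap ℝ A r + a ∈ M

namespace AbsLE

variable {a b : A} {r s : ℝ}

lemma neg (h : M.AbsLE a r) : M.AbsLE (-a) r := by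
  rwa [AbsLE, sub_neg_eq_add, ← sub_eq_add_neg, and_comm]

lemma add (ha : M.AbsLE a r) (hb : M.AbsLE b s) : M.AbsLE (a + b) (r + s) := by
  constructor
  · convert add_mem ha.1 hb.1 using 1
    rw [map_add]
    ring
  · convert add_mem ha.2 hb.2 using 1
    rw [map_add]
    ring

lemma algebraMap_sq_sub_sq_mem (hr : 0 < r) (h : M.AbsLE a r) :
    algebraMap ℝ A r ^ 2 - a ^ 2 ∈ M := by
  apply mem_of_algebraMap_mul_mem (r := 2 * r) (by positivity)
  convert add_mem (sq_mul_mem (algebraMap ℝ A r - a) h.2) (sq_mul_mem (algebraMap ℝ A r + a) h.1)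
    using 1
  simp only [map_mul, map_ofNat]
  ring

lemma mul (hr : 0 < r) (hs : 0 < s) (ha : M.AbsLE a r) (hb : M.AbsLE b s) :
    M.AbsLE (a * b) (r * s) := by
  have key (c : A) (hc : M.AbsLE c r) : algebraMap ℝ A (r * s) + c * b ∈ M := by
    apply mem_of_algebraMap_mul_mem (r := 2 * (r * s)) (by positivity)
    convert add_mem
      (add_mem (sq_mul_mem (algebraMap ℝ A s) (hc.algebraMap_sq_sub_sq_mem hr))
        (sq_mul_mem (algebraMap ℝ A r) (hb.algebraMap_sq_sub_sq_mem hs)))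
      (M.sq_mem (algebraMap ℝ A s * c + algebraMap ℝ A r * b)) using 1
    simp only [map_mul, map_ofNat]
    ring
  exact ⟨by simpa [sub_eq_add_neg] using key (-a) ha.neg, key a ha⟩

lemma of_sq (h : algebraMap ℝ A r - a ^ 2 ∈ M) : M.AbsLE a (r + 1) := by
  have key (u : A) (hu : algebraMap ℝ A r - u ^ 2 ∈ M) : algebraMap ℝ A (r + 1) + u ∈ M := by
    have half : algebraMap ℝ A (1 / 2) * 2 = 1 := by
      rw [← map_ofNat (algebraMap ℝ A) 2, ← map_mul]
      norm_num
    convert add_mem (add_mem hu (M.sq_mem (u + algebraMap ℝ A (1 / 2))))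
      (algebraMap_mem M (r := 1 - (1 / 2) ^ 2) (by norm_num)) using 1
    rw [map_add, map_sub, map_one, map_pow]
    linear_combination -u * half
  exact ⟨by simpa [sub_eq_add_neg] using key (-a) (by simpa using h), key a h⟩

end AbsLE

lemma absLE_algebraMap (r : ℝ) : M.AbsLE (algebraMap ℝ A r) (|r| + 1) := by
  constructor
  · rw [← map_sub]
    exact algebraMap_mem M (by linarith [le_abs_self r])
  · rw [← map_add]
    exact algebraMap_mem M (by linarith [neg_abs_le r])

variable (M) in
/-- The subalgebra of all elements that are bounded by a real number modulo `M`. -/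
def boundedSubalgebra : Subalgebra ℝ A where
  carrier := {a | ∃ r : ℝ, 0 < r ∧ M.AbsLE a r}
  mul_mem' := fun ⟨r, hr, ha⟩ ⟨s, hs, hb⟩ => ⟨r * s, mul_pos hr hs, ha.mul hr hs hb⟩
  add_mem' := fun ⟨r, hr, ha⟩ ⟨s, hs, hb⟩ => ⟨r + s, add_pos hr hs, ha.add hb⟩
  algebraMap_mem' r := ⟨|r| + 1, by positivity, absLE_algebraMap r⟩

variable (M) in
/-- A quadratic module is archimedean if it bounds every element of the ring by a real number. -/
def IsArchimedean : Prop := M.boundedSubalgebra = ⊤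

namespace IsArchimedean

lemma exists_absLE (hM : M.IsArchimedean) (a : A) : ∃ r : ℝ, 0 < r ∧ M.AbsLE a r := by
  have : a ∈ M.boundedSubalgebra := hM ▸ Algebra.mem_top
  exact this

lemma mono {N : QuadraticModule A} (hM : M.IsArchimedean) (hMN : M ≤ N) : N.IsArchimedean :=
  eq_top_iff.2 fun a _ =>
    let ⟨r, hr, ha⟩ := hM.exists_absLE a
    ⟨r, hr, hMN ha.1, hMN ha.2⟩

end IsArchimedean

lemma isArchimedean_of_sub_sum_sq_mem {σ : Type*} [Fintype σ]
    {M : QuadraticModule (MvPolynomial σ ℝ)} {N : ℝ} (hN : C N - ∑ i, X i ^ 2 ∈ M) :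
    M.IsArchimedean := by
  classical
  rw [IsArchimedean, eq_top_iff, ← adjoin_range_X, Algebra.adjoin_le_iff, Set.range_subset_iff]
  intro i
  have hi : algebraMap ℝ _ N - X i ^ 2 ∈ M := by
    have hsum : ∑ j ∈ Finset.univ.erase i, (X j : MvPolynomial σ ℝ) ^ 2 ∈ M :=
      sum_mem fun j _ => M.sq_mem (X j)
    convert add_mem hN hsum using 1
    rw [← Finset.add_sum_erase _ _ (Finset.mem_univ i), algebraMap_eq]
    ring
  have habs : algebraMap ℝ _ |N| - X i ^ 2 ∈ M := algebraMap_sub_mem_of_le (le_abs_self N) hi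
  exact ⟨|N| + 1, by positivity, .of_sq habs⟩

section Maximal

variable {Q : QuadraticModule A}

lemma mul_mem_of_mem_of_neg_mem {a : A} (ha : a ∈ Q) (hna : -a ∈ Q) (b : A) : b * a ∈ Q := by
  apply mem_of_algebraMap_mul_mem (r := 4) (by norm_num)
  convert add_mem (sq_mul_mem (b + 1) ha) (sq_mul_mem (b - 1) hna) using 1
  rw [map_ofNat]
  ring

lemma mem_or_neg_mem_of_maximal (hQ : Maximal (fun Q : QuadraticModule A => (-1 : A) ∉ Q) Q)
    (a : A) : a ∈ Q ∨ -a ∈ Q := by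
  by_contra! ⟨ha, hna⟩
  have neg_one_mem {p : A} (hp : p ∉ Q) : (-1 : A) ∈ Q.adjoin p := by
    by_contra hcon
    exact hp (hQ.2 hcon (Q.le_adjoin p) (Q.mem_adjoin_self p))
  obtain ⟨q, hq, s, hs, e⟩ := neg_one_mem ha
  obtain ⟨q', hq', s', hs', e'⟩ := neg_one_mem hna
  have hns : -s ∈ Q := by
    convert add_mem (add_mem (Q.mem_of_isSumSq hs') (mul_mem_of_isSumSq hs hq'))
      (mul_mem_of_isSumSq hs' hq) using 1
    linear_combination s' * e + s * e'
  refine hQ.1 ?_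
  rw [e, mul_comm]
  exact add_mem hq (mul_mem_of_mem_of_neg_mem (Q.mem_of_isSumSq hs) hns a)

/-- The ideal of the elements that are smaller in absolute value than every positive real. -/
def infinitesimals (hQ : Q.IsArchimedean) : Ideal A where
  carrier := {a | ∀ ε : ℝ, 0 < ε → Q.AbsLE a ε}
  zero_mem' ε hε := ⟨by simpa using algebraMap_mem Q hε.le, by simpa using algebraMap_mem Q hε.le⟩
  add_mem' ha hb ε hε := by
    simpa using (ha (ε / 2) (half_pos hε)).add (hb (ε / 2) (half_pos hε))
  smul_mem' c a ha ε hε := by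
    obtain ⟨r, hr, hc⟩ := hQ.exists_absLE c
    simpa [mul_div_cancel₀ _ hr.ne'] using hc.mul hr (div_pos hε hr) (ha (ε / r) (div_pos hε hr))

lemma exists_sub_algebraMap_mem_infinitesimals (hA : Q.IsArchimedean)
    (hQ : Maximal (fun Q : QuadraticModule A => (-1 : A) ∉ Q) Q) (a : A) :
    ∃ t : ℝ, a - algebraMap ℝ A t ∈ infinitesimals hA := by
  let S := {r : ℝ | a - algebraMap ℝ A r ∈ Q}
  obtain ⟨r, -, har⟩ := hA.exists_absLE a
  have hne : S.Nonempty := ⟨-r, by simpa [S, add_comm] using har.2⟩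
  have hbdd : BddAbove S := ⟨r, fun t ht => sub_nonneg.1 <| nonneg_of_algebraMap_mem hQ.1 <| by
    simpa using add_mem har.1 ht⟩
  refine ⟨sSup S, fun ε hε => ⟨?_, ?_⟩⟩
  · refine (mem_or_neg_mem_of_maximal hQ _).resolve_right fun h => ?_
    have : sSup S + ε ∈ S := by
      simp only [S, Set.mem_ofPred_eq, map_add]
      convert h using 1
      ring
    linarith [le_csSup hbdd this]
  · obtain ⟨t, ht, hlt⟩ := exists_lt_of_lt_csSup hne (sub_lt_self (sSup S) hε)
    have ht : a - algebraMap ℝ A t ∈ Q := ht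
    convert add_mem ht (algebraMap_mem Q (r := t - (sSup S - ε)) (by linarith)) using 1
    simp only [map_sub]
    ring

end Maximal

lemma exists_algHom_nonneg (hA : M.IsArchimedean) (hM : (-1 : A) ∉ M) :
    ∃ φ : A →ₐ[ℝ] ℝ, ∀ m ∈ M, 0 ≤ φ m := by
  obtain ⟨Q, hMQ, hQ⟩ := M.exists_le_maximal hM
  let I := infinitesimals (hA.mono hMQ)
  have nonneg_of_mem {a : A} {t : ℝ} (ha : a ∈ Q) (hat : a - algebraMap ℝ A t ∈ I) : 0 ≤ t := by
    refine le_of_forall_pos_le_add fun ε hε => nonneg_of_algebraMap_mem hQ.1 ?_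
    convert add_mem ha (hat ε hε).1 using 1
    rw [map_add]
    ring
  have : Nontrivial (A ⧸ I) := Ideal.Quotient.nontrivial_iff.2 fun hI => by
    have h1 : (0 : A) - algebraMap ℝ A (-1) ∈ I := hI ▸ Submodule.mem_top
    linarith [nonneg_of_mem (zero_mem Q) h1]
  have hbij : Function.Bijective (Algebra.ofId ℝ (A ⧸ I)) := by
    refine ⟨(algebraMap ℝ (A ⧸ I)).injective, fun x => ?_⟩
    obtain ⟨a, rfl⟩ := Ideal.Quotient.mk_surjective x
    obtain ⟨t, ht⟩ := exists_sub_algebraMap_mem_infinitesimals (hA.mono hMQ) hQ a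
    exact ⟨t, (Ideal.Quotient.eq.2 ht).symm⟩
  let e := AlgEquiv.ofBijective (Algebra.ofId ℝ (A ⧸ I)) hbij
  refine ⟨e.symm.toAlgHom.comp (Ideal.Quotient.mkₐ ℝ I), fun m hm => nonneg_of_mem (hMQ hm) ?_⟩
  exact Ideal.Quotient.eq.1 (e.apply_symm_apply (Ideal.Quotient.mk I m)).symm

lemma exists_isSumSq_mul_sub_one_mem (hA : M.IsArchimedean) {p : A}
    (hp : ∀ φ : A →ₐ[ℝ] ℝ, (∀ m ∈ M, 0 ≤ φ m) → 0 < φ p) :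
    ∃ g, IsSumSq g ∧ g * p - 1 ∈ M := by
  have h : (-1 : A) ∈ M.adjoin (-p) := by
    by_contra hcon
    obtain ⟨φ, hφ⟩ := exists_algHom_nonneg (hA.mono (M.le_adjoin (-p))) hcon
    have hpos := hp φ fun m hm => hφ m (M.le_adjoin (-p) hm)
    have hneg := hφ (-p) (M.mem_adjoin_self (-p))
    rw [map_neg] at hneg
    linarith
  obtain ⟨q, hq, g, hg, e⟩ := h
  exact ⟨g, hg, by convert hq using 1; linear_combination e⟩

lemma add_algebraMap_sub_inv_mem {p g : A} {k r : ℝ} (hg : IsSumSq g) (hgp : g * p - 1 ∈ M)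
    (hk : 0 < k) (hgk : algebraMap ℝ A k - g ∈ M) (hgpk : algebraMap ℝ A k - g ^ 2 * p ∈ M)
    (hr : 0 ≤ r) (hpr : p + algebraMap ℝ A r ∈ M) : p + algebraMap ℝ A (r - k⁻¹) ∈ M := by
  apply mem_of_algebraMap_mul_mem (r := k ^ 2) (by positivity)
  have hgk' : algebraMap ℝ A (2 * k) - g ∈ M := algebraMap_sub_mem_of_le (by linarith) hgk
  convert add_mem (add_mem (sq_mul_mem (algebraMap ℝ A k - g) hpr)
    (algebraMap_mul_mem (r := 2 * k) (by positivity) hgp))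
    (add_mem hgpk (algebraMap_mul_mem hr (mul_mem_of_isSumSq hg hgk'))) using 1
  rw [mul_add, ← map_mul, show k ^ 2 * (r - k⁻¹) = k ^ 2 * r - k by field_simp]
  simp only [map_mul, map_pow, map_ofNat, map_sub]
  ring

/-- The identity behind `add_algebraMap_sub_inv_mem` lowers `r` in `p + r ∈ M` by the fixed
amount `k⁻¹`, so finitely many steps reach `p ∈ M`. -/
theorem mem_of_forall_algHom_pos (hA : M.IsArchimedean) {p : A}
    (hp : ∀ φ : A →ₐ[ℝ] ℝ, (∀ m ∈ M, 0 ≤ φ m) → 0 < φ p) : p ∈ M := by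
  obtain ⟨g, hg, hgp⟩ := exists_isSumSq_mul_sub_one_mem hA hp
  obtain ⟨k₁, hk₁, hgpk₁, -⟩ := hA.exists_absLE (g ^ 2 * p)
  obtain ⟨k₂, -, hgk₂, -⟩ := hA.exists_absLE g
  let k := max k₁ k₂
  have hk : 0 < k := lt_max_of_lt_left hk₁
  have lower {r : ℝ} (hr : 0 ≤ r) (hpr : p + algebraMap ℝ A r ∈ M) :
      p + algebraMap ℝ A (r - k⁻¹) ∈ M :=
    add_algebraMap_sub_inv_mem hg hgp hk (algebraMap_sub_mem_of_le (le_max_right _ _) hgk₂)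
      (algebraMap_sub_mem_of_le (le_max_left _ _) hgpk₁) hr hpr
  have descend (N : ℕ) : ∀ r : ℝ, r ≤ N * k⁻¹ → p + algebraMap ℝ A r ∈ M → p ∈ M := by
    induction N with
    | zero =>
      intro r hr hpr
      simpa using add_mem hpr (algebraMap_mem M (r := -r) (by simpa using hr))
    | succ N ih =>
      intro r hr hpr
      rcases le_total 0 r with h0 | h0
      · refine ih (r - k⁻¹) ?_ (lower h0 hpr)
        push_cast at hr
        linarith
      · exact ih r (h0.trans (by positivity)) hpr
  obtain ⟨r, -, -, hr⟩ := hA.exists_absLE p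
  obtain ⟨N, hN⟩ := exists_nat_gt (r * k)
  exact descend N r (by rw [← div_eq_mul_inv, le_div_iff₀ hk]; exact hN.le) (by rwa [add_comm])

end Real

end QuadraticModule

/-! ### Preorderings and ordered fields -/

universe u

section Preordering

variable {A : Type u} [CommRing A]

/-- The preordering `T + T p`, possibly improper, where `T` is a subsemiring that contains the
squares. -/
def preorderingAdjoin (T : Subsemiring A) (hT : ∀ {x}, IsSquare x → x ∈ T) (p : A) :
    Subsemiring A where
  carrier := {x | ∃ a ∈ T, ∃ b ∈ T, x = a + b * p}
  zero_mem' := ⟨0, zero_mem T, 0, zero_mem T, by simp⟩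
  one_mem' := ⟨1, one_mem T, 0, zero_mem T, by simp⟩
  add_mem' := by
    rintro _ _ ⟨a, ha, b, hb, rfl⟩ ⟨a', ha', b', hb', rfl⟩
    exact ⟨a + a', add_mem ha ha', b + b', add_mem hb hb', by ring⟩
  mul_mem' := by
    rintro _ _ ⟨a, ha, b, hb, rfl⟩ ⟨a', ha', b', hb', rfl⟩
    exact ⟨a * a' + p ^ 2 * (b * b'),
      add_mem (mul_mem ha ha') (mul_mem (hT (.sq p)) (mul_mem hb hb')),
      a * b' + b * a', add_mem (mul_mem ha hb') (mul_mem hb ha'), by ring⟩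

section Adjoin

variable {T : Subsemiring A} (hT : ∀ {x}, IsSquare x → x ∈ T)

lemma le_preorderingAdjoin (p : A) : T ≤ preorderingAdjoin T hT p :=
  fun x hx => ⟨x, hx, 0, zero_mem T, by simp⟩

lemma mem_preorderingAdjoin_self (p : A) : p ∈ preorderingAdjoin T hT p :=
  ⟨0, zero_mem T, 1, one_mem T, by simp⟩

end Adjoin

lemma exists_le_maximal_ringPreordering (P : RingPreordering A) : ∃ Q, P ≤ Q ∧ IsMax Q := by
  suffices h : ∃ Q, P ≤ Q ∧ Maximal (fun _ : RingPreordering A => True) Q by simpa using h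
  refine zorn_le_nonempty₀ Set.univ (fun c _ hchain P hP => ?_) P trivial
  let S := RingPreordering.toSubsemiring '' c
  have mem_sSup {x : A} : x ∈ sSup S ↔ ∃ Q ∈ c, x ∈ Q := by
    rw [Subsemiring.mem_sSup_of_directedOn (Set.Nonempty.image _ ⟨P, hP⟩)]
    · simp
    · exact directedOn_image.2 hchain.directedOn
  refine ⟨⟨sSup S, fun hx => mem_sSup.2 ⟨P, hP, P.mem_of_isSquare hx⟩, fun h => ?_⟩, trivial,
    fun Q hQ x hx => mem_sSup.2 ⟨Q, hQ, hx⟩⟩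
  obtain ⟨Q, -, hQ⟩ := mem_sSup.1 h
  exact Q.neg_one_notMem hQ

variable {P : RingPreordering A}

lemma exists_neg_one_eq_add_mul_of_isMax (hP : IsMax P) {p : A} (hp : p ∉ P) :
    ∃ a ∈ P, ∃ b ∈ P, -1 = a + b * p := by
  by_contra hcon
  have hle := le_preorderingAdjoin P.mem_of_isSquare p
  let Q : RingPreordering A :=
    ⟨preorderingAdjoin P.toSubsemiring P.mem_of_isSquare p, fun hx => hle (P.mem_of_isSquare hx),
      hcon⟩
  exact hp (hP (b := Q) hle (mem_preorderingAdjoin_self P.mem_of_isSquare p))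

lemma mem_or_mem_of_neg_mul_mem (hP : IsMax P) {a b : A} (hab : -(a * b) ∈ P) :
    a ∈ P ∨ b ∈ P := by
  by_contra! ⟨ha, hb⟩
  obtain ⟨p, hp, q, hq, e⟩ := exists_neg_one_eq_add_mul_of_isMax hP ha
  obtain ⟨p', hp', q', hq', e'⟩ := exists_neg_one_eq_add_mul_of_isMax hP hb
  apply P.neg_one_notMem
  convert add_mem (add_mem hp hp') (add_mem (mul_mem hp hp') (mul_mem hab (mul_mem hq hq'))) using 1
  linear_combination (1 + p') * e - q * a * e'

lemma hasMemOrNegMem_of_isMax (hP : IsMax P) : HasMemOrNegMem P where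
  mem_or_neg_mem a := mem_or_mem_of_neg_mul_mem hP (by simp)

lemma isOrdering_of_isMax (hP : IsMax P) : P.IsOrdering :=
  have := hasMemOrNegMem_of_isMax hP
  { ne_top' := RingPreordering.support_ne_top P
    mem_or_mem' := fun {a b} hab => by
      obtain ⟨h, h'⟩ := RingPreordering.mem_support.1 hab
      have hna := mem_or_mem_of_neg_mul_mem hP (a := -a) (b := b) (by simpa using h)
      have hnb := mem_or_mem_of_neg_mul_mem hP (a := a) (b := -b) (by simpa using h)
      have hnab := mem_or_mem_of_neg_mul_mem hP (a := -a) (b := -b) (by simpa using h')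
      have hab := mem_or_mem_of_neg_mul_mem hP h'
      simp only [RingPreordering.mem_support]
      tauto }

lemma exists_linearOrder_of_ringCone {F : Type*} [Field F] (S : RingCone F) [HasMemOrNegMem S] :
    ∃ (_ : LinearOrder F) (_ : IsStrictOrderedRing F), ∀ x : F, 0 ≤ x ↔ x ∈ S := by
  classical
  let order : LinearOrder F := LinearOrder.mkOfAddGroupCone S
  have : IsOrderedRing F := IsOrderedRing.mkOfCone S
  refine ⟨order, IsOrderedRing.toIsStrictOrderedRing F, fun x => ?_⟩
  change x - 0 ∈ S ↔ x ∈ S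
  rw [sub_zero]

/-- The cone that an ordering `P` induces on a field of fractions of the quotient by its support.
Fractions are normalized to have square denominators. -/
def fractionCone [P.IsOrdering] {F : Type*} [Field F] (φ : A →+* F)
    (hφ : ∀ a, φ a = 0 ↔ a ∈ P.support) : RingCone F where
  carrier := {x | ∃ a ∈ P, ∃ b, φ b ≠ 0 ∧ x * φ b ^ 2 = φ a}
  zero_mem' := ⟨0, zero_mem P, 1, by simp, by simp⟩
  one_mem' := ⟨1, one_mem P, 1, by simp, by simp⟩
  add_mem' := by
    rintro x y ⟨a, ha, b, hb, e⟩ ⟨a', ha', b', hb', e'⟩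
    refine ⟨a * b' ^ 2 + a' * b ^ 2, add_mem (mul_mem ha (P.pow_two_mem b'))
      (mul_mem ha' (P.pow_two_mem b)), b * b', by simp [hb, hb'], ?_⟩
    simp only [map_add, map_mul, map_pow, ← e, ← e']
    ring
  mul_mem' := by
    rintro x y ⟨a, ha, b, hb, e⟩ ⟨a', ha', b', hb', e'⟩
    refine ⟨a * a', mul_mem ha ha', b * b', by simp [hb, hb'], ?_⟩
    simp only [map_mul, ← e, ← e']
    ring
  eq_zero_of_mem_of_neg_mem' := by
    rintro x ⟨a, ha, b, hb, e⟩ ⟨a', ha', b', hb', e'⟩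
    have hsum : a * b' ^ 2 + a' * b ^ 2 ∈ P.support := by
      rw [← hφ]
      simp only [map_add, map_mul, map_pow, ← e, ← e']
      ring
    have hmem : a * b' ^ 2 ∈ P.support := by
      refine RingPreordering.mem_support.2 ⟨mul_mem ha (P.pow_two_mem b'), ?_⟩
      convert add_mem (RingPreordering.mem_support.1 hsum).2 (mul_mem ha' (P.pow_two_mem b)) using 1
      ring
    have hzero : x * φ b ^ 2 * φ b' ^ 2 = 0 := by
      rw [e, ← map_pow, ← map_mul, hφ]
      exact hmem
    simpa [hb, hb'] using hzero

theorem exists_orderedField_hom_nonneg (P : RingPreordering A) :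
    ∃ (F : Type u) (_ : Field F) (_ : LinearOrder F) (_ : IsStrictOrderedRing F) (φ : A →+* F),
      ∀ t ∈ P, 0 ≤ φ t := by
  obtain ⟨Q, hPQ, hQ⟩ := exists_le_maximal_ringPreordering P
  have := isOrdering_of_isMax hQ
  let B := A ⧸ Q.support
  let F := FractionRing B
  let φ : A →+* F := (algebraMap B F).comp (Ideal.Quotient.mk Q.support)
  have hφ (a : A) : φ a = 0 ↔ a ∈ Q.support := by
    rw [← Ideal.Quotient.eq_zero_iff_mem]
    exact map_eq_zero_iff _ (IsFractionRing.injective B F)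
  have : HasMemOrNegMem (fractionCone φ hφ) := ⟨fun x => by
    obtain ⟨a, b, hb, rfl⟩ := IsFractionRing.div_surjective (A := B) x
    obtain ⟨a, rfl⟩ := Ideal.Quotient.mk_surjective a
    obtain ⟨b, rfl⟩ := Ideal.Quotient.mk_surjective b
    have hb : φ b ≠ 0 := IsFractionRing.to_map_ne_zero_of_mem_nonZeroDivisors (R := B) hb
    have e : φ a / φ b * φ b ^ 2 = φ (a * b) := by
      rw [map_mul, pow_two, ← mul_assoc, div_mul_cancel₀ _ hb]
    exact (mem_or_neg_mem Q (a * b)).imp (fun h => ⟨a * b, h, b, hb, e⟩)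
      fun h => ⟨-(a * b), h, b, hb, by rw [map_neg, ← e]; exact neg_mul _ _⟩⟩
  obtain ⟨order, ordered, hle⟩ := exists_linearOrder_of_ringCone (fractionCone φ hφ)
  exact ⟨F, inferInstance, order, ordered, φ, fun t ht =>
    (hle _).2 ⟨t, hPQ ht, 1, by simp, by simp⟩⟩

end Preordering

/-! ### Ordered fields with the intermediate value property for polynomials -/

lemma exists_eq_X_sub_C_pow_succ_mul {R : Type*} [CommRing R] {f : Polynomial R} (hf : f ≠ 0)
    {a : R} (ha : f.IsRoot a) :
    ∃ (m : ℕ) (g : Polynomial R),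
      f = (Polynomial.X - Polynomial.C a) ^ (m + 1) * g ∧ ¬g.IsRoot a := by
  obtain ⟨g, hg, hg'⟩ := Polynomial.exists_eq_pow_rootMultiplicity_mul_and_not_dvd f hf a
  obtain ⟨m, hm⟩ := Nat.exists_eq_succ_of_ne_zero ((Polynomial.rootMultiplicity_pos hf).2 ha).ne'
  exact ⟨m, g, by rwa [hm] at hg, fun h => hg' (Polynomial.dvd_iff_isRoot.2 h)⟩

open Filter in
lemma exists_eval_coe_eq_coe_eval {I R : Type*} [Semiring R] {l : Filter I}
    (f : Polynomial (Germ l R)) :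
    ∃ F : I → Polynomial R, ∀ c : I → R, f.eval (c : Germ l R) =
      ((fun u => (F u).eval (c u) : I → R) : Germ l R) := by
  induction f using Polynomial.induction_on' with
  | add f g ihf ihg =>
    obtain ⟨F, hF⟩ := ihf
    obtain ⟨G, hG⟩ := ihg
    refine ⟨F + G, fun c => ?_⟩
    simp only [Polynomial.eval_add, hF, hG, Pi.add_apply]
    rfl
  | monomial n r =>
    induction r using Germ.inductionOn with | _ r
    refine ⟨fun u => Polynomial.monomial n (r u), fun c => ?_⟩
    rw [Polynomial.eval_monomial]
    simp only [Polynomial.eval_monomial]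
    rfl

/-- The intermediate value property for polynomials; it characterizes the real closed fields among
the ordered fields. -/
def HasPolynomialIVT (R : Type*) [Field R] [LinearOrder R] : Prop :=
  ∀ (f : Polynomial R) {a b : R}, a ≤ b → f.eval a * f.eval b ≤ 0 → ∃ c ∈ Set.Icc a b, f.IsRoot c

namespace HasPolynomialIVT

section Calculus

open Polynomial

variable {R : Type*} [Field R] [LinearOrder R]

lemma exists_root_Ioo (hR : HasPolynomialIVT R) (f : Polynomial R) {a b : R} (hab : a ≤ b)
    (hf : f.eval a * f.eval b < 0) : ∃ c ∈ Set.Ioo a b, f.IsRoot c := by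
  obtain ⟨c, ⟨hac, hcb⟩, hc⟩ := hR f hab hf.le
  refine ⟨c, ⟨hac.lt_of_ne ?_, hcb.lt_of_ne ?_⟩, hc⟩
  · rintro rfl
    simp [hc.eq_zero] at hf
  · rintro rfl
    simp [hc.eq_zero] at hf

lemma mul_eval_pos_of_forall_not_isRoot (hR : HasPolynomialIVT R) {f : Polynomial R} {a b : R}
    (hab : a ≤ b) (hf : ∀ c ∈ Set.Icc a b, ¬f.IsRoot c) : 0 < f.eval a * f.eval b := by
  by_contra! hle
  obtain ⟨c, hc, hroot⟩ := hR f hab hle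
  exact hf c hc hroot

variable [IsStrictOrderedRing R]

lemma exists_root_Icc_of_exists_root
    (h : ∀ (f : Polynomial R) (a b : R), f.eval a * f.eval b < 0 → ∃ c, f.IsRoot c)
    {f : Polynomial R} {a b : R} (hab : a ≤ b) (hf : f.eval a * f.eval b < 0) :
    ∃ c ∈ Set.Icc a b, f.IsRoot c := by
  induction hd : f.natDegree generalizing f with
  | zero =>
    obtain ⟨r, rfl⟩ := natDegree_eq_zero.1 hd
    simp only [Polynomial.eval_C] at hf
    exact absurd hf (mul_self_nonneg r).not_gt
  | succ d ih =>
    obtain ⟨c, hc⟩ := h f a b hf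
    by_cases hin : c ∈ Set.Icc a b
    · exact ⟨c, hin, hc⟩
    obtain ⟨g, rfl⟩ := dvd_iff_isRoot.2 hc
    have hg : g ≠ 0 := by
      rintro rfl
      simp at hf
    have hpos : 0 < (a - c) * (b - c) := by
      rw [Set.mem_Icc, not_and_or, not_le, not_le] at hin
      rcases hin with hin | hin
      · exact mul_pos (by linarith) (by linarith)
      · exact mul_pos_of_neg_of_neg (by linarith) (by linarith)
    have hgab : g.eval a * g.eval b < 0 := by
      simp only [Polynomial.eval_mul, Polynomial.eval_sub, Polynomial.eval_X,
        Polynomial.eval_C] at hf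
      refine neg_of_mul_neg_right ?_ hpos.le
      linarith
    rw [natDegree_mul (X_sub_C_ne_zero c) hg, natDegree_X_sub_C] at hd
    obtain ⟨e, he, hge⟩ := ih hgab (by omega)
    exact ⟨e, he, hge.dvd (dvd_mul_left g _)⟩

lemma of_exists_root
    (h : ∀ (f : Polynomial R) (a b : R), f.eval a * f.eval b < 0 → ∃ c, f.IsRoot c) :
    HasPolynomialIVT R := by
  intro f a b hab hf
  rcases hf.lt_or_eq with hlt | heq
  · exact exists_root_Icc_of_exists_root h hab hlt
  · rcases mul_eq_zero.1 heq with h0 | h0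
    exacts [⟨a, ⟨le_rfl, hab⟩, h0⟩, ⟨b, ⟨hab, le_rfl⟩, h0⟩]

lemma isSquare_of_nonneg (hR : HasPolynomialIVT R) {a : R} (ha : 0 ≤ a) : IsSquare a := by
  obtain ⟨c, -, hc⟩ := hR (Polynomial.X ^ 2 - Polynomial.C a) (show 0 ≤ a + 1 by linarith) (by
    simp only [Polynomial.eval_sub, Polynomial.eval_pow, Polynomial.eval_X, Polynomial.eval_C]
    exact mul_nonpos_of_nonpos_of_nonneg (by linarith) (by nlinarith))
  refine ⟨c, ?_⟩
  simp only [IsRoot.def, Polynomial.eval_sub, Polynomial.eval_pow, Polynomial.eval_X,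
    Polynomial.eval_C] at hc
  linear_combination -hc

lemma strictMono {L : Type*} [Field L] [LinearOrder L] [IsStrictOrderedRing L]
    (hR : HasPolynomialIVT R) (φ : R →+* L) : StrictMono φ := by
  refine Monotone.strictMono_of_injective ?_ φ.injective
  refine (monotone_iff_map_nonneg φ).2 fun a ha => ?_
  obtain ⟨c, rfl⟩ := hR.isSquare_of_nonneg ha
  rw [map_mul]
  exact mul_self_nonneg _

/-- Up to the factor `(X - a)ᵐ(X - b)ⁿ`, the derivative of `(X - a)ᵐ⁺¹(X - b)ⁿ⁺¹g` is
`(m + 1)(X - b)g + (n + 1)(X - a)g + (X - a)(X - b)g'`, which has opposite signs at `a` and `b`. -/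
lemma exists_derivative_root_of_forall_not_isRoot (hR : HasPolynomialIVT R) {a b : R} (hab : a < b)
    {g : Polynomial R} (hg : ∀ c ∈ Set.Icc a b, ¬g.IsRoot c) (m n : ℕ) :
    ∃ c ∈ Set.Ioo a b, (derivative ((Polynomial.X - Polynomial.C a) ^ (m + 1) *
      ((Polynomial.X - Polynomial.C b) ^ (n + 1) * g))).IsRoot c := by
  let H : Polynomial R := Polynomial.C ((m + 1 : ℕ) : R) * (Polynomial.X - Polynomial.C b) * g +
    Polynomial.C ((n + 1 : ℕ) : R) * (Polynomial.X - Polynomial.C a) * g +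
    (Polynomial.X - Polynomial.C a) * (Polynomial.X - Polynomial.C b) * derivative g
  have hder : derivative ((Polynomial.X - Polynomial.C a) ^ (m + 1) *
      ((Polynomial.X - Polynomial.C b) ^ (n + 1) * g)) =
      (Polynomial.X - Polynomial.C a) ^ m * (Polynomial.X - Polynomial.C b) ^ n * H := by
    simp only [derivative_mul, derivative_X_sub_C_pow, H, Nat.add_sub_cancel]
    ring
  have hHab : H.eval a * H.eval b < 0 := by
    have hgab := hR.mul_eval_pos_of_forall_not_isRoot hab.le hg
    have hpos : 0 < ((m : R) + 1) * (n + 1) * (b - a) ^ 2 * (g.eval a * g.eval b) := by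
      have := sub_pos.2 hab
      positivity
    have hHa : H.eval a = (m + 1) * (a - b) * g.eval a := by simp [H]
    have hHb : H.eval b = (n + 1) * (b - a) * g.eval b := by simp [H]
    rw [hHa, hHb]
    linarith
  obtain ⟨c, hc, hHc⟩ := hR.exists_root_Ioo H hab.le hHab
  exact ⟨c, hc, hder ▸ hHc.dvd (dvd_mul_left H _)⟩

lemma exists_derivative_root (hR : HasPolynomialIVT R) (f : Polynomial R) {a b : R} (hab : a < b)
    (ha : f.IsRoot a) (hb : f.IsRoot b) : ∃ c ∈ Set.Ioo a b, (derivative f).IsRoot c := by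
  classical
  rcases eq_or_ne f 0 with rfl | hf
  · exact ⟨(a + b) / 2, by constructor <;> linarith, by simp⟩
  obtain ⟨b', hb', hmin⟩ := Finset.exists_minimal (s := {x ∈ f.roots.toFinset | a < x ∧ x ≤ b})
    ⟨b, by simp [hf, hb.eq_zero, hab]⟩
  simp only [Finset.mem_filter, Multiset.mem_toFinset, mem_roots hf] at hb' hmin
  obtain ⟨hroot, hab', hb'b⟩ := hb'
  have no_root {x : R} (hax : a < x) (hxb : x < b') : ¬f.IsRoot x := fun hx =>
    hxb.not_ge (hmin ⟨hx, hax, hxb.le.trans hb'b⟩ hxb.le)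
  obtain ⟨m, g₁, rfl, hg₁a⟩ := exists_eq_X_sub_C_pow_succ_mul hf ha
  have hg₁b : g₁.IsRoot b' := by
    simpa [sub_eq_zero, hab'.ne'] using hroot
  obtain ⟨n, g, rfl, hgb⟩ := exists_eq_X_sub_C_pow_succ_mul (right_ne_zero_of_mul hf) hg₁b
  obtain ⟨c, hc, hc'⟩ := hR.exists_derivative_root_of_forall_not_isRoot hab' (g := g) (m := m)
    (n := n) fun c ⟨hac, hcb⟩ hgc => by
      rcases hac.eq_or_lt with rfl | hac
      · exact hg₁a (hgc.dvd (dvd_mul_left g _))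
      rcases hcb.eq_or_lt with rfl | hcb
      · exact hgb hgc
      · exact no_root hac hcb (hgc.dvd ((dvd_mul_left g _).mul_left _))
  exact ⟨c, ⟨hc.1, hc.2.trans_le hb'b⟩, hc'⟩

lemma eval_lt_eval_of_derivative_pos (hR : HasPolynomialIVT R) {f : Polynomial R} {a b : R}
    (hab : a < b) (hf : ∀ c ∈ Set.Ioo a b, 0 < (derivative f).eval c) : f.eval a < f.eval b := by
  obtain ⟨c, hc, hroot⟩ := hR.exists_derivative_root
    (f * Polynomial.C (b - a) - Polynomial.C (f.eval b - f.eval a) *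
      (Polynomial.X - Polynomial.C a) - Polynomial.C (f.eval a * (b - a))) hab
    (by simp) (by simp; ring)
  have hc' := hf c hc
  simp only [IsRoot.def, derivative_sub, derivative_mul, derivative_C, derivative_X, mul_zero,
    add_zero, zero_mul, zero_add, sub_zero, mul_one, Polynomial.eval_sub, Polynomial.eval_mul,
    Polynomial.eval_C] at hroot
  have : 0 < (derivative f).eval c * (b - a) := mul_pos hc' (sub_pos.2 hab)
  linarith

end Calculus

protected lemma real : HasPolynomialIVT ℝ := by
  intro f a b hab hf
  have h0 : (0 : ℝ) ∈ Set.uIcc (f.eval a) (f.eval b) := by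
    rw [Set.mem_uIcc]
    rcases mul_nonpos_iff.1 hf with ⟨ha, hb⟩ | ⟨ha, hb⟩
    exacts [.inr ⟨hb, ha⟩, .inl ⟨ha, hb⟩]
  obtain ⟨c, hc, hroot⟩ := intermediate_value_uIcc f.continuous.continuousOn h0
  exact ⟨c, by rwa [Set.uIcc_of_le hab] at hc, hroot⟩

section Germ

open Filter

variable {I R : Type*} [Field R] [LinearOrder R] {U : Ultrafilter I}

protected lemma germ (hR : HasPolynomialIVT R) : HasPolynomialIVT (Germ (U : Filter I) R) := by
  intro f a b hab hf
  obtain ⟨F, hF⟩ := exists_eval_coe_eq_coe_eval f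
  induction a using Germ.inductionOn with | _ a
  induction b using Germ.inductionOn with | _ b
  rw [hF, hF, ← Germ.coe_mul] at hf
  have hroot : ∀ᶠ u in (U : Filter I), ∃ c, (a u ≤ c ∧ c ≤ b u) ∧ (F u).eval c = 0 := by
    filter_upwards [Germ.coe_le.1 hab, Germ.coe_le.1 hf] with u hab hf
    exact hR (F u) hab hf
  obtain ⟨c, hc⟩ := hroot.choice
  refine ⟨(c : Germ (U : Filter I) R), ⟨Germ.coe_le.2 ?_, Germ.coe_le.2 ?_⟩, ?_⟩
  · exact hc.mono fun u h => h.1.1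
  · exact hc.mono fun u h => h.1.2
  · rw [Polynomial.IsRoot.def, hF]
    exact Germ.coe_eq.2 (hc.mono fun u h => h.2)

end Germ

end HasPolynomialIVT

/-! ### Transfer of signs between ordered extensions -/

lemma abs_le_of_isRoot_of_monic {R : Type*} [Field R] [LinearOrder R] [IsStrictOrderedRing R]
    {f : Polynomial R} (hf : f.Monic) {a : R} (ha : f.IsRoot a) :
    |a| ≤ 1 + ∑ k ∈ Finset.range f.natDegree, |f.coeff k| := by
  have hsum : 0 ≤ ∑ k ∈ Finset.range f.natDegree, |f.coeff k| :=
    Finset.sum_nonneg fun _ _ => abs_nonneg _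
  rcases le_or_gt |a| 1 with h1 | h1
  · linarith
  obtain ⟨d, hd⟩ : ∃ d, f.natDegree = d + 1 := Nat.exists_eq_succ_of_ne_zero fun h0 => by
    simp [hf.natDegree_eq_zero.1 h0] at ha
  have hroot : a ^ (d + 1) = -∑ k ∈ Finset.range (d + 1), f.coeff k * a ^ k := by
    have := ha.eq_zero
    rw [hf.as_sum, hd] at this
    simp only [Polynomial.eval_add, Polynomial.eval_pow, Polynomial.eval_X,
      Polynomial.eval_finsetSum, Polynomial.eval_mul, Polynomial.eval_C] at this
    linarith
  have hle : |a| * |a| ^ d ≤ (∑ k ∈ Finset.range (d + 1), |f.coeff k|) * |a| ^ d := by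
    calc |a| * |a| ^ d = |a ^ (d + 1)| := by rw [abs_pow, pow_succ']
      _ ≤ ∑ k ∈ Finset.range (d + 1), |f.coeff k| * |a| ^ k := by
        rw [hroot, abs_neg]
        refine (Finset.abs_sum_le_sum_abs _ _).trans_eq ?_
        simp only [abs_mul, abs_pow]
      _ ≤ ∑ k ∈ Finset.range (d + 1), |f.coeff k| * |a| ^ d := by
        gcongr with k hk
        · exact h1.le
        · exact Nat.le_of_lt_succ (Finset.mem_range.1 hk)
      _ = _ := (Finset.sum_mul _ _ _).symm
  rw [hd]
  linarith [le_of_mul_le_mul_right hle (by positivity)]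

lemma exists_Ioo_of_finset {E L : Type*} [LinearOrder L] {i : E → L} {x : L} {b c : E}
    (hx : x ∈ Set.Ioo (i b) (i c)) (S : Finset E) (hS : ∀ e ∈ S, i e ≠ x) :
    ∃ b c, x ∈ Set.Ioo (i b) (i c) ∧ ∀ e ∈ S, i e ∉ Set.Ioo (i b) (i c) := by
  classical
  obtain ⟨b', hb', hmax⟩ := (insert b {e ∈ S | i e < x}).exists_max_image i ⟨b, by simp⟩
  obtain ⟨c', hc', hmin⟩ := (insert c {e ∈ S | x < i e}).exists_min_image i ⟨c, by simp⟩
  simp only [Finset.mem_insert, Finset.mem_filter] at hb' hc' hmax hmin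
  refine ⟨b', c', ⟨?_, ?_⟩, fun e he ⟨hbe, hec⟩ => ?_⟩
  · rcases hb' with rfl | hb'
    exacts [hx.1, hb'.2]
  · rcases hc' with rfl | hc'
    exacts [hx.2, hc'.2]
  · rcases lt_or_gt_of_ne (hS e he) with h | h
    exacts [(hmax e (.inr ⟨he, h⟩)).not_gt hbe, (hmin e (.inr ⟨he, h⟩)).not_gt hec]

section SignTransfer

open Polynomial

variable {E L M : Type*} [Field E] [Field L] [LinearOrder L] {i : E →+* L}

lemma exists_Ioo_forall_iterate_derivative {x : L} {b c : E}
    (hx : x ∈ Set.Ioo (i b) (i c)) (hxE : x ∉ Set.range i) (G : Finset (Polynomial E))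
    (hG : ∀ g ∈ G, ∀ k, derivative^[k] g ≠ 0 → ∀ y, (derivative^[k] g).eval₂ i y = 0 →
      y ∈ Set.range i) :
    ∃ b c, x ∈ Set.Ioo (i b) (i c) ∧ ∀ g ∈ G, ∀ k, ∀ y ∈ Set.Ioo (i b) (i c),
      (derivative^[k] g).eval₂ i y = 0 → derivative^[k] g = 0 := by
  classical
  let S : Finset E := G.biUnion fun g => (Finset.range (g.natDegree + 1)).biUnion fun k =>
    (derivative^[k] g).roots.toFinset
  obtain ⟨b, c, hx, hbc⟩ := exists_Ioo_of_finset hx S fun e _ he => hxE ⟨e, he⟩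
  refine ⟨b, c, hx, fun g hg k y hy hroot => by_contra fun hne => ?_⟩
  obtain ⟨e, rfl⟩ := hG g hg k hne y hroot
  have hk : k < g.natDegree + 1 := by
    by_contra! hk
    exact hne (iterate_derivative_eq_zero hk)
  rw [Polynomial.eval₂_hom, map_eq_zero] at hroot
  refine hbc e (Finset.mem_biUnion.2 ⟨g, hg, Finset.mem_biUnion.2 ⟨k, ?_, ?_⟩⟩) hy
  · exact Finset.mem_range.2 hk
  · exact Multiset.mem_toFinset.2 ((mem_roots hne).2 hroot)

variable [IsStrictOrderedRing L]

lemma HasPolynomialIVT.eval_pos_of_forall_not_isRoot_Ioo (hL : HasPolynomialIVT L)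
    {f : Polynomial L} {a b : L} (hf : ∀ x ∈ Set.Ioo a b, ¬f.IsRoot x) {x : L}
    (hx : x ∈ Set.Ioo a b) (hfx : 0 < f.eval x) :
    (∀ y ∈ Set.Ioo a b, 0 < f.eval y) ∧ 0 ≤ f.eval a ∧ 0 ≤ f.eval b := by
  have hleft {y : L} (hay : a ≤ y) (hyx : y ≤ x) : 0 ≤ f.eval y := by
    by_contra! hneg
    obtain ⟨c, hc, hroot⟩ := hL.exists_root_Ioo f hyx (mul_neg_of_neg_of_pos hneg hfx)
    exact hf c ⟨hay.trans_lt hc.1, hc.2.trans hx.2⟩ hroot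
  have hright {y : L} (hxy : x ≤ y) (hyb : y ≤ b) : 0 ≤ f.eval y := by
    by_contra! hneg
    obtain ⟨c, hc, hroot⟩ := hL.exists_root_Ioo f hxy (mul_neg_of_pos_of_neg hfx hneg)
    exact hf c ⟨hx.1.trans hc.1, hc.2.trans_le hyb⟩ hroot
  refine ⟨fun y hy => lt_of_le_of_ne ?_ (Ne.symm (hf y hy)), hleft le_rfl hx.1.le,
    hright hx.2.le le_rfl⟩
  exact (le_total y x).elim (hleft hy.1.le) fun h => hright h hy.2.le

lemma HasPolynomialIVT.eval_mul_eval_neg_of_isRoot (hL : HasPolynomialIVT L) {f : Polynomial L}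
    {a b x : L} (hx : x ∈ Set.Ioo a b) (hfx : f.IsRoot x)
    (hf : ∀ y ∈ Set.Ioo a b, ¬(derivative f).IsRoot y) : f.eval a * f.eval b < 0 := by
  wlog hpos : 0 < (derivative f).eval x generalizing f
  · simpa using this (f := -f) (by simpa using hfx) (by simpa using hf) (by
      simpa using lt_of_le_of_ne (not_lt.1 hpos) (hf x hx))
  have hder := (hL.eval_pos_of_forall_not_isRoot_Ioo hf hx hpos).1
  refine mul_neg_of_neg_of_pos ?_ ?_ <;> rw [← hfx.eq_zero]
  · exact hL.eval_lt_eval_of_derivative_pos hx.1 fun y hy => hder y ⟨hy.1, hy.2.trans hx.2⟩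
  · exact hL.eval_lt_eval_of_derivative_pos hx.2 fun y hy => hder y ⟨hx.1.trans hy.1, hy.2⟩

variable [LinearOrder E] [Field M] [LinearOrder M] {j : E →+* M}

lemma HasPolynomialIVT.exists_root_Ioo_map (hL : HasPolynomialIVT L) (hM : HasPolynomialIVT M)
    (hi : StrictMono i) (hj : StrictMono j) {f : Polynomial E} {b c : E} {x : L}
    (hx : x ∈ Set.Ioo (i b) (i c)) (hfx : f.eval₂ i x = 0)
    (hf : ∀ y ∈ Set.Ioo (i b) (i c), (derivative f).eval₂ i y ≠ 0) :
    ∃ y ∈ Set.Ioo (j b) (j c), f.eval₂ j y = 0 := by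
  have hneg : (f.map i).eval (i b) * (f.map i).eval (i c) < 0 := by
    refine hL.eval_mul_eval_neg_of_isRoot hx (by rwa [IsRoot, Polynomial.eval_map])
      fun y hy hroot => hf y hy ?_
    rwa [IsRoot, derivative_map, Polynomial.eval_map] at hroot
  have hneg' : (f.map j).eval (j b) * (f.map j).eval (j c) < 0 := by
    rwa [Polynomial.eval_map, Polynomial.eval_map, Polynomial.eval₂_hom, Polynomial.eval₂_hom,
      ← map_mul, ← sign_eq_neg_one_iff, StrictMono.sign_comp ‹_›] at hneg ⊢
  have hbc : b < c := hi.lt_iff_lt.1 (hx.1.trans hx.2)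
  obtain ⟨y, hy, hroot⟩ := hM.exists_root_Ioo _ (hj hbc).le hneg'
  exact ⟨y, hy, by rwa [IsRoot, Polynomial.eval_map] at hroot⟩

variable [IsStrictOrderedRing E] [IsStrictOrderedRing M]

lemma HasPolynomialIVT.eval₂_pos_of_eval₂_pos (hL : HasPolynomialIVT L) (hM : HasPolynomialIVT M)
    (hi : StrictMono i) (hj : StrictMono j) {b c : E} (g : Polynomial E)
    (hg : ∀ k, ∀ x ∈ Set.Ioo (i b) (i c), (derivative^[k] g).eval₂ i x = 0 → derivative^[k] g = 0)
    {x : L} (hx : x ∈ Set.Ioo (i b) (i c)) (hgx : 0 < g.eval₂ i x)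
    {y : M} (hy : y ∈ Set.Ioo (j b) (j c)) : 0 < g.eval₂ j y := by
  induction hd : g.natDegree using Nat.strong_induction_on generalizing g x y with | _ d ih
  subst hd
  rcases eq_or_ne g.natDegree 0 with h0 | h0
  · obtain ⟨r, rfl⟩ := natDegree_eq_zero.1 h0
    rw [Polynomial.eval₂_C, ← sign_eq_one_iff] at hgx ⊢
    rwa [hj.sign_comp, ← hi.sign_comp]
  obtain ⟨-, hgb, hgc⟩ := hL.eval_pos_of_forall_not_isRoot_Ioo (f := g.map i)
    (fun z hz hroot => h0 (by
      rw [IsRoot, Polynomial.eval_map] at hroot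
      rw [show g = 0 from hg 0 z hz hroot, natDegree_zero])) hx (by rwa [Polynomial.eval_map])
  rw [Polynomial.eval_map, Polynomial.eval₂_hom, ← sign_nonneg_iff, hi.sign_comp, ← hj.sign_comp,
    sign_nonneg_iff] at hgb hgc
  have hlt := natDegree_derivative_lt h0
  rcases lt_trichotomy ((derivative g).eval₂ i x) 0 with hneg | hzero | hpos
  · have hderiv : ∀ z ∈ Set.Ioo (j b) (j c), 0 < (-derivative g).eval₂ j z := fun z hz =>
      ih _ hlt (-derivative g) (fun k w hw => by
        rw [iterate_derivative_neg, Polynomial.eval₂_neg, neg_eq_zero, neg_eq_zero]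
        exact hg (k + 1) w hw) hx (by rwa [Polynomial.eval₂_neg, neg_pos]) hz (natDegree_neg _)
    have := hM.eval_lt_eval_of_derivative_pos (f := -g.map j) hy.2 fun z hz => by
      have := hderiv z ⟨hy.1.trans hz.1, hz.2⟩
      rwa [← Polynomial.eval_map, Polynomial.map_neg, ← derivative_map, ← derivative_neg] at this
    simp only [Polynomial.eval_neg, Polynomial.eval_map, Polynomial.eval₂_hom] at this
    linarith
  · exact absurd (derivative_eq_zero.1 (hg 1 x hx hzero)) h0
  · have hderiv : ∀ z ∈ Set.Ioo (j b) (j c), 0 < (derivative g).eval₂ j z := fun z hz =>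
      ih _ hlt (derivative g) (fun k => hg (k + 1)) hx hpos hz rfl
    have := hM.eval_lt_eval_of_derivative_pos (f := g.map j) hy.1 fun z hz => by
      rw [derivative_map, Polynomial.eval_map]
      exact hderiv z ⟨hz.1, hz.2.trans hy.2⟩
    rw [Polynomial.eval_map, Polynomial.eval_map, Polynomial.eval₂_hom] at this
    linarith

/-- The elements `x` and `y` of two extensions of `E` realize the same cut of `E`, in the sense that
no polynomial over `E` tells them apart by its sign. -/
def SameSigns (i : E →+* L) (j : E →+* M) (x : L) (y : M) : Prop :=
  ∀ g : Polynomial E, SignType.sign (g.eval₂ i x) = SignType.sign (g.eval₂ j y)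

/-- An element of `L` lying in an interval without roots of any derivative of `g` can be replaced
by any element of `M` in that interval. -/
lemma HasPolynomialIVT.sign_eval₂_eq (hL : HasPolynomialIVT L) (hM : HasPolynomialIVT M)
    (hi : StrictMono i) (hj : StrictMono j) {b c : E} (g : Polynomial E)
    (hg : ∀ k, ∀ x ∈ Set.Ioo (i b) (i c), (derivative^[k] g).eval₂ i x = 0 → derivative^[k] g = 0)
    {x : L} (hx : x ∈ Set.Ioo (i b) (i c)) {y : M} (hy : y ∈ Set.Ioo (j b) (j c)) :
    SignType.sign (g.eval₂ i x) = SignType.sign (g.eval₂ j y) := by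
  rcases lt_trichotomy (g.eval₂ i x) 0 with hneg | hzero | hpos
  · have := hL.eval₂_pos_of_eval₂_pos hM hi hj (-g) (fun k w hw => by
      rw [iterate_derivative_neg, Polynomial.eval₂_neg, neg_eq_zero, neg_eq_zero]
      exact hg k w hw) hx (by rwa [Polynomial.eval₂_neg, neg_pos]) hy
    rw [Polynomial.eval₂_neg, neg_pos] at this
    rw [sign_neg hneg, sign_neg this]
  · rw [show g = 0 from hg 0 x hx hzero, Polynomial.eval₂_zero, Polynomial.eval₂_zero, sign_zero,
      sign_zero]
  · rw [sign_pos hpos, sign_pos (hL.eval₂_pos_of_eval₂_pos hM hi hj g hg hx hpos hy)]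

lemma exists_mem_Ioo_map_of_isRoot (hi : StrictMono i) {f : Polynomial E} (hf : f.Monic) {x : L}
    (hx : f.eval₂ i x = 0) : ∃ b c, x ∈ Set.Ioo (i b) (i c) := by
  let B := 1 + ∑ k ∈ Finset.range f.natDegree, |f.coeff k|
  have habs (e : E) : |i e| = i |e| := by
    rcases le_total 0 e with he | he
    · rw [abs_of_nonneg he, abs_of_nonneg (map_zero i ▸ hi.monotone he)]
    · rw [abs_of_nonpos he, abs_of_nonpos (map_zero i ▸ hi.monotone he), map_neg]
  have hB : |x| ≤ i B := by
    have := abs_le_of_isRoot_of_monic (hf.map i) (a := x) (by rwa [IsRoot, Polynomial.eval_map])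
    simpa only [natDegree_map, Polynomial.coeff_map, habs, ← map_sum, ← map_one i, ← map_add]
      using this
  have := abs_le.1 hB
  refine ⟨-B - 1, B + 1, ?_, ?_⟩
  · rw [map_sub, map_neg, map_one]
    linarith
  · rw [map_add, map_one]
    linarith

/-- If every root `y` of `f` in `M` had its own polynomial `g y` telling it apart from `x`, then a
small interval around `x` on which no `g y` and no derivative of it has a root would contain a root
of `f` in `M` by the intermediate value property, and that root is not told apart from `x`. -/
lemma HasPolynomialIVT.exists_sameSigns_of_isRoot (hL : HasPolynomialIVT L)
    (hM : HasPolynomialIVT M) (hi : StrictMono i) (hj : StrictMono j) {f : Polynomial E}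
    (hf : f.Monic) {x : L} (hx : f.eval₂ i x = 0) (hxE : x ∉ Set.range i)
    (hdeg : ∀ g : Polynomial E, g ≠ 0 → g.natDegree < f.natDegree → ∀ y, g.eval₂ i y = 0 →
      y ∈ Set.range i) : ∃ y, SameSigns i j x y := by
  classical
  by_contra! hcon
  simp only [SameSigns, not_forall] at hcon
  choose g hg using hcon
  have hf1 : f ≠ 1 := by
    rintro rfl
    simp at hx
  have hf0 : f.natDegree ≠ 0 := fun h => hf1 (hf.natDegree_eq_zero.1 h)
  let G : Finset (Polynomial E) :=
    insert (derivative f) ((f.map j).roots.toFinset.image fun y => g y %ₘ f)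
  have hG : ∀ h ∈ G, h.natDegree < f.natDegree := by
    simp only [G, Finset.mem_insert, Finset.mem_image]
    rintro h (rfl | ⟨y, -, rfl⟩)
    exacts [natDegree_derivative_lt hf0, natDegree_modByMonic_lt _ hf hf1]
  obtain ⟨b₀, c₀, hx₀⟩ := exists_mem_Ioo_map_of_isRoot hi hf hx
  obtain ⟨b, c, hxbc, hbc⟩ := exists_Ioo_forall_iterate_derivative hx₀ hxE G fun h hh k hk =>
    hdeg _ hk ((natDegree_iterate_derivative h k).trans_lt ((Nat.sub_le _ _).trans_lt (hG h hh)))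
  obtain ⟨y, hy, hroot⟩ := hL.exists_root_Ioo_map hM hi hj hxbc hx fun y hy hroot =>
    hf0 (derivative_eq_zero.1 (hbc _ (Finset.mem_insert_self _ _) 0 y hy hroot))
  have hmem : g y %ₘ f ∈ G := Finset.mem_insert_of_mem (Finset.mem_image_of_mem _
    (by simp [(hf.map j).ne_zero, Polynomial.eval_map, hroot]))
  apply hg y
  rw [← eval₂_modByMonic_eq_self_of_root hx, ← eval₂_modByMonic_eq_self_of_root hroot]
  exact hL.sign_eval₂_eq hM hi hj _ (hbc _ hmem) hxbc hy

lemma HasPolynomialIVT.mem_range_of_isRoot (hL : HasPolynomialIVT L) (hM : HasPolynomialIVT M)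
    (hi : StrictMono i) (hj : StrictMono j) (h : ∀ x y, SameSigns i j x y → x ∈ Set.range i)
    {f : Polynomial E} (hf : f ≠ 0) {x : L} (hx : f.eval₂ i x = 0) : x ∈ Set.range i := by
  induction hd : f.natDegree using Nat.strong_induction_on generalizing f x with | _ d ih
  subst hd
  by_contra hxE
  obtain ⟨y, hy⟩ := hL.exists_sameSigns_of_isRoot hM hi hj
    (monic_mul_leadingCoeff_inv hf) (by rw [Polynomial.eval₂_mul, hx, zero_mul]) hxE
    fun g hg0 hg y hy => ih _ (by rwa [natDegree_mul_leadingCoeff_inv f hf] at hg) hg0 hy rfl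
  exact hxE (h x y hy)

end SignTransfer

/-! ### Sign-preserving correspondences -/

lemma exists_linearOrder_strictMono {E L : Type*} [Field E] [Field L] [LinearOrder L]
    [IsStrictOrderedRing L] (i : E →+* L) :
    ∃ (_ : LinearOrder E) (_ : IsStrictOrderedRing E), StrictMono i := by
  let order : LinearOrder E := LinearOrder.lift' i i.injective
  have hi : StrictMono i := fun _ _ h => h
  exact ⟨order, Function.Injective.isStrictOrderedRing i (map_zero i) (map_one i) (map_add i)
    (map_mul i) hi.le_iff_le hi.lt_iff_lt, hi⟩

lemma HasPolynomialIVT.of_forall_root_mem_range {E L : Type*} [Field E] [LinearOrder E]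
    [Field L] [LinearOrder L] (hL : HasPolynomialIVT L) {i : E →+* L} (hi : StrictMono i)
    (h : ∀ f : Polynomial E, f ≠ 0 → ∀ x, f.eval₂ i x = 0 → x ∈ Set.range i) :
    HasPolynomialIVT E := by
  intro f a b hab hf
  rcases eq_or_ne f 0 with rfl | hf0
  · exact ⟨a, ⟨le_rfl, hab⟩, by simp⟩
  obtain ⟨c, hc, hroot⟩ := hL (f.map i) (hi.monotone hab) (by
    rw [Polynomial.eval_map, Polynomial.eval_map, Polynomial.eval₂_hom, Polynomial.eval₂_hom,
      ← map_mul, ← map_zero i]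
    exact hi.monotone hf)
  rw [Polynomial.IsRoot, Polynomial.eval_map] at hroot
  obtain ⟨e, rfl⟩ := h f hf0 c hroot
  refine ⟨e, ⟨hi.le_iff_le.1 hc.1, hi.le_iff_le.1 hc.2⟩, ?_⟩
  rwa [Polynomial.eval₂_hom, map_eq_zero] at hroot

section SignPreserving

variable {L M : Type u} [Field L] [LinearOrder L] [Field M] [LinearOrder M]

/-- A subring of `L × M` is sign preserving if the two components of each of its elements have the
same sign. Such subrings are the graphs of order isomorphisms between subrings of `L` and `M`. -/
def IsSignPreserving (Γ : Subring (L × M)) : Prop :=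
  ∀ p ∈ Γ, SignType.sign p.1 = SignType.sign p.2

variable {Γ : Subring (L × M)}

lemma IsSignPreserving.exists_le_maximal (hΓ : IsSignPreserving Γ) :
    ∃ Δ, Γ ≤ Δ ∧ Maximal IsSignPreserving Δ := by
  refine zorn_le_nonempty₀ {Δ | IsSignPreserving Δ} (fun c hc hchain Δ hΔ => ?_) Γ hΓ
  refine ⟨sSup c, fun p hp => ?_, fun _ => le_sSup⟩
  obtain ⟨Δ, hΔ, hp⟩ := (Subring.mem_sSup_of_directedOn ⟨Δ, hΔ⟩ hchain.directedOn).1 hp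
  exact hc hΔ p hp

lemma SameSigns.mem_of_maximal (hΓ : Maximal IsSignPreserving Γ) {E : Type*} [Field E]
    {i : E →+* L} {j : E →+* M} (hE : ∀ p ∈ Γ, ∃ e, (i e, j e) = p) {x : L} {y : M}
    (h : SameSigns i j x y) : (x, y) ∈ Γ := by
  let Δ : Subring (L × M) :=
    ((Polynomial.eval₂RingHom i x).prod (Polynomial.eval₂RingHom j y)).range
  have hΔ : IsSignPreserving Δ := by
    rintro _ ⟨g, rfl⟩
    exact h g
  have hle : Γ ≤ Δ := fun p hp => by
    obtain ⟨e, rfl⟩ := hE p hp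
    exact ⟨Polynomial.C e, by simp⟩
  exact hΓ.le_of_ge hΔ hle ⟨Polynomial.X, by simp⟩

/-- The subring of all quotients of elements of `Γ` with positive denominators. -/
def positiveLocalization [IsStrictOrderedRing L] (Γ : Subring (L × M)) : Subring (L × M) where
  carrier := {p | ∃ s ∈ Γ, 0 < s.1 ∧ s * p ∈ Γ}
  zero_mem' := ⟨1, one_mem Γ, by simp, by simp [zero_mem]⟩
  one_mem' := ⟨1, one_mem Γ, by simp, by simp [one_mem]⟩
  add_mem' := by
    rintro p q ⟨s, hs, hs0, hsp⟩ ⟨t, ht, ht0, htq⟩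
    refine ⟨s * t, mul_mem hs ht, mul_pos hs0 ht0, ?_⟩
    convert add_mem (mul_mem ht hsp) (mul_mem hs htq) using 1
    ring
  mul_mem' := by
    rintro p q ⟨s, hs, hs0, hsp⟩ ⟨t, ht, ht0, htq⟩
    refine ⟨s * t, mul_mem hs ht, mul_pos hs0 ht0, ?_⟩
    convert mul_mem hsp htq using 1
    ring
  neg_mem' := by
    rintro p ⟨s, hs, hs0, hsp⟩
    exact ⟨s, hs, hs0, by rw [mul_neg]; exact neg_mem hsp⟩

variable [IsStrictOrderedRing L] [IsStrictOrderedRing M]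

lemma IsSignPreserving.positiveLocalization (hΓ : IsSignPreserving Γ) :
    IsSignPreserving (positiveLocalization Γ) := by
  rintro p ⟨s, hs, hs0, hsp⟩
  have hs' : SignType.sign s.2 = 1 := (hΓ s hs).symm.trans (sign_pos hs0)
  simpa [sign_mul, sign_pos hs0, hs'] using hΓ _ hsp

lemma isField_of_maximal_isSignPreserving (hΓ : Maximal IsSignPreserving Γ) : IsField Γ where
  exists_pair_ne := ⟨0, 1, zero_ne_one⟩
  mul_comm := mul_comm
  mul_inv_cancel := by
    rintro ⟨p, hp⟩ hne
    have h1 : p.1 ≠ 0 := fun h1 => hne <| Subtype.ext <| Prod.ext h1 <|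
      sign_eq_zero_iff.1 ((hΓ.prop p hp).symm.trans (by rw [h1, sign_zero]))
    have h2 : p.2 ≠ 0 := fun h2 => h1 <|
      sign_eq_zero_iff.1 ((hΓ.prop p hp).trans (by rw [h2, sign_zero]))
    have hinv : p * (p.1⁻¹, p.2⁻¹) = 1 := Prod.ext (mul_inv_cancel₀ h1) (mul_inv_cancel₀ h2)
    have hle : Γ ≤ positiveLocalization Γ := fun q hq => ⟨1, one_mem Γ, by simp, by simpa⟩
    refine ⟨⟨(p.1⁻¹, p.2⁻¹), hΓ.le_of_ge hΓ.prop.positiveLocalization hle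
      ⟨p ^ 2, pow_mem hp 2, by simp only [Prod.pow_fst]; positivity, ?_⟩⟩, Subtype.ext hinv⟩
    rwa [pow_two, mul_assoc, hinv, mul_one]

lemma exists_field_of_maximal_isSignPreserving (hΓ : Maximal IsSignPreserving Γ) :
    ∃ (E : Type u) (_ : Field E) (κ : Γ →+* E) (i : E →+* L) (j : E →+* M),
      (∀ p : Γ, (i (κ p), j (κ p)) = (p : L × M)) ∧ ∀ e, (i e, j e) ∈ Γ :=
  ⟨Γ, (isField_of_maximal_isSignPreserving hΓ).toField, RingHom.id Γ,
    (RingHom.fst L M).comp Γ.subtype, (RingHom.snd L M).comp Γ.subtype, fun _ => rfl, fun e => e.2⟩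

/-- The domain of a maximal sign-preserving correspondence is relatively algebraically closed, hence
inherits the intermediate value property. -/
theorem HasPolynomialIVT.exists_common_subfield (hL : HasPolynomialIVT L) (hM : HasPolynomialIVT M)
    {A : Type*} [CommRing A] (φ : A →+* L) (ψ : A →+* M)
    (h : ∀ a, SignType.sign (φ a) = SignType.sign (ψ a)) :
    ∃ (E : Type u) (_ : Field E) (_ : LinearOrder E) (_ : IsStrictOrderedRing E)
      (κ : A →+* E) (i : E →+* L) (j : E →+* M),
      HasPolynomialIVT E ∧ (∀ a, i (κ a) = φ a) ∧ ∀ a, j (κ a) = ψ a := by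
  have hrange : IsSignPreserving (φ.prod ψ).range := by
    rintro _ ⟨a, rfl⟩
    exact h a
  obtain ⟨Γ, hle, hΓ⟩ := hrange.exists_le_maximal
  obtain ⟨E, field, κ, i, j, hκ, hmem⟩ := exists_field_of_maximal_isSignPreserving hΓ
  obtain ⟨order, ordered, hi⟩ := exists_linearOrder_strictMono i
  have hj : StrictMono j := fun a b hab => by
    rw [← sub_pos, ← map_sub, ← sign_eq_one_iff, ← hΓ.prop _ (hmem _), sign_eq_one_iff, map_sub,
      sub_pos]
    exact hi hab
  have hclosed (x : L) (y : M) (hxy : SameSigns i j x y) : x ∈ Set.range i :=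
    ⟨κ ⟨(x, y), hxy.mem_of_maximal hΓ fun p hp => ⟨κ ⟨p, hp⟩, hκ _⟩⟩, (Prod.ext_iff.1 (hκ _)).1⟩
  refine ⟨E, field, order, ordered, κ.comp ((Subring.inclusion hle).comp (φ.prod ψ).rangeRestrict),
    i, j, hL.of_forall_root_mem_range hi fun f hf x => hL.mem_range_of_isRoot hM hi hj hclosed hf,
    fun a => ?_, fun a => ?_⟩
  · exact (Prod.ext_iff.1 (hκ ⟨(φ a, ψ a), hle ⟨a, rfl⟩⟩)).1
  · exact (Prod.ext_iff.1 (hκ ⟨(φ a, ψ a), hle ⟨a, rfl⟩⟩)).2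

end SignPreserving

/-! ### Existential closedness -/

section ExistentialClosedness

open Filter

section Germ

variable {R : Type u} [Field R]

/-- Evaluation of polynomials along an ultrafilter, that is, at the germ of the identity. -/
noncomputable def evalGerm (U : Ultrafilter R) : Polynomial R →+* Germ (U : Filter R) R :=
  (Germ.coeRingHom (U : Filter R)).comp (RingHom.pi Polynomial.evalRingHom)

variable {U : Ultrafilter R}

lemma eval₂_evalGerm_comp_C {n : ℕ} (z : Fin n → R → R) (q : MvPolynomial (Fin n) R) :
    q.eval₂ ((evalGerm U).comp Polynomial.C) (fun k => (z k : Germ (U : Filter R) R)) =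
      ((fun u => eval (fun k => z k u) q : R → R) : Germ (U : Filter R) R) := by
  suffices h : eval₂Hom ((evalGerm U).comp Polynomial.C)
      (fun k => (z k : Germ (U : Filter R) R)) =
      (Germ.coeRingHom (U : Filter R)).comp (RingHom.pi fun u => eval fun k => z k u) from
    RingHom.congr_fun h q
  refine ringHom_ext (fun r => ?_) fun k => ?_
  · exact (eval₂Hom_C _ _ _).trans (Germ.coe_eq.2 (.of_forall fun u => by simp))
  · exact (eval₂Hom_X' _ _ _).trans (Germ.coe_eq.2 (.of_forall fun u => by simp))

variable [LinearOrder R]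

lemma sign_evalGerm {p : Polynomial R} {s : SignType}
    (h : ∀ᶠ u in (U : Filter R), SignType.sign (p.eval u) = s) :
    SignType.sign (evalGerm U p) = s := by
  change SignType.sign ((fun u => p.eval u : R → R) : Germ (U : Filter R) R) = s
  cases s with
  | zero =>
    exact sign_eq_zero_iff.2 (Germ.coe_eq.2 (h.mono fun u hu => sign_eq_zero_iff.1 hu))
  | pos =>
    exact sign_eq_one_iff.2 (Germ.coe_pos.2 (h.mono fun u hu => sign_eq_one_iff.1 hu))
  | neg =>
    exact sign_eq_neg_one_iff.2 (Germ.coe_lt.2 (h.mono fun u hu => sign_eq_neg_one_iff.1 hu))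

end Germ

/-- Turns the first variable into a constant of `E`. -/
noncomputable def absorbFirstVariable {R E : Type*} [Field R] [Field E] {n : ℕ}
    (κ : Polynomial R →+* E) : MvPolynomial (Fin (n + 1)) R →+* MvPolynomial (Fin n) E :=
  eval₂Hom (C.comp (κ.comp Polynomial.C)) (Fin.cons (C (κ Polynomial.X)) X)

lemma eval₂_absorbFirstVariable {R E S : Type*} [Field R] [Field E] [CommRing S] {n : ℕ}
    (κ : Polynomial R →+* E) (i : E →+* S) (x : Fin n → S) (q : MvPolynomial (Fin (n + 1)) R) :
    (absorbFirstVariable κ q).eval₂ i x =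
      q.eval₂ (i.comp (κ.comp Polynomial.C)) (Fin.cons (i (κ Polynomial.X)) x) := by
  suffices h : (eval₂Hom i x).comp (absorbFirstVariable κ) =
      eval₂Hom (i.comp (κ.comp Polynomial.C)) (Fin.cons (i (κ Polynomial.X)) x) from
    RingHom.congr_fun h q
  refine ringHom_ext (fun r => by simp [absorbFirstVariable]) fun k => ?_
  cases k using Fin.cases <;> simp [absorbFirstVariable]

variable {R L : Type u} [Field R] [LinearOrder R] [IsStrictOrderedRing R]
  [Field L] [LinearOrder L] [IsStrictOrderedRing L]

lemma HasPolynomialIVT.mem_range_of_eval₂_eq_zero (hR : HasPolynomialIVT R)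
    (hL : HasPolynomialIVT L) (ι : R →+* L) {f : Polynomial R} (hf : f ≠ 0) {x : L}
    (hx : f.eval₂ ι x = 0) : x ∈ Set.range ι := by
  refine hL.mem_range_of_isRoot hR (hR.strictMono ι) (j := RingHom.id R) strictMono_id
    (fun x y hxy => ⟨y, ?_⟩) hf hx
  have := hxy (Polynomial.X - Polynomial.C y)
  simp only [Polynomial.eval₂_sub, Polynomial.eval₂_X, Polynomial.eval₂_C, RingHom.id_apply,
    sub_self, sign_zero, sign_eq_zero_iff, sub_eq_zero] at this
  exact this.symm

lemma HasPolynomialIVT.sign_eval_eq_sign_eval (hL : HasPolynomialIVT L) {f : Polynomial L} {a b : L}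
    (hf : ∀ c ∈ Set.uIcc a b, ¬f.IsRoot c) :
    SignType.sign (f.eval a) = SignType.sign (f.eval b) := by
  wlog hab : a ≤ b generalizing a b
  · exact (this (by rwa [Set.uIcc_comm]) (le_of_not_ge hab)).symm
  rw [Set.uIcc_of_le hab] at hf
  rcases pos_and_pos_or_neg_and_neg_of_mul_pos (hL.mul_eval_pos_of_forall_not_isRoot hab hf) with
    ⟨ha, hb⟩ | ⟨ha, hb⟩
  · rw [sign_pos ha, sign_pos hb]
  · rw [sign_neg ha, sign_neg hb]

lemma HasPolynomialIVT.exists_forall_sign_eval_eq (hR : HasPolynomialIVT R)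
    (hL : HasPolynomialIVT L) (ι : R →+* L) (t : L) (G : Finset (Polynomial R)) :
    ∃ u : R, ∀ p ∈ G, SignType.sign (p.eval u) = SignType.sign (p.eval₂ ι t) := by
  classical
  have hι := hR.strictMono ι
  by_cases ht : t ∈ Set.range ι
  · obtain ⟨u, rfl⟩ := ht
    exact ⟨u, fun p _ => by rw [Polynomial.eval₂_hom, hι.sign_comp]⟩
  let S : Finset R := G.biUnion fun p => p.roots.toFinset
  obtain ⟨u, hlo, hhi⟩ := Order.exists_between_finsets {e ∈ S | ι e < t} {e ∈ S | t < ι e}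
    (by simp only [Finset.mem_filter]
        exact fun x hx y hy => hι.lt_iff_lt.1 (hx.2.trans hy.2))
  refine ⟨u, fun p hp => ?_⟩
  rcases eq_or_ne p 0 with rfl | hp0
  · simp
  rw [← hι.sign_comp, ← Polynomial.eval₂_hom, ← Polynomial.eval_map, ← Polynomial.eval_map]
  refine hL.sign_eval_eq_sign_eval fun c hc hroot => ?_
  rw [Polynomial.IsRoot, Polynomial.eval_map] at hroot
  obtain ⟨e, rfl⟩ := hR.mem_range_of_eval₂_eq_zero hL ι hp0 hroot
  rw [Polynomial.eval₂_hom, map_eq_zero] at hroot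
  have he : e ∈ S := Finset.mem_biUnion.2 ⟨p, hp, by simpa [hp0] using hroot⟩
  rcases lt_or_gt_of_ne fun h : ι e = t => ht ⟨e, h⟩ with h | h
  · have := hι (hlo e (Finset.mem_filter.2 ⟨he, h⟩))
    exact (lt_min this h).not_ge hc.1
  · have := hι (hhi e (Finset.mem_filter.2 ⟨he, h⟩))
    exact (max_lt this h).not_ge hc.2

lemma HasPolynomialIVT.exists_ultrafilter_sign_eval_eq (hR : HasPolynomialIVT R)
    (hL : HasPolynomialIVT L) (ι : R →+* L) (t : L) :
    ∃ U : Ultrafilter R, ∀ p : Polynomial R,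
      ∀ᶠ u in (U : Filter R), SignType.sign (p.eval u) = SignType.sign (p.eval₂ ι t) := by
  classical
  let S (p : Polynomial R) : Set R :=
    {u | SignType.sign (p.eval u) = SignType.sign (p.eval₂ ι t)}
  obtain ⟨U, hU⟩ := Ultrafilter.exists_ultrafilter_of_finite_inter_nonempty (Set.range S)
    fun T hT => by
      obtain ⟨G, -, rfl⟩ := Finset.subset_set_image_iff.1 (by rwa [← Set.image_univ] at hT)
      obtain ⟨u, hu⟩ := hR.exists_forall_sign_eval_eq hL ι t G
      exact ⟨u, by simpa [S] using hu⟩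
  exact ⟨U, fun p => hU ⟨p, rfl⟩⟩

/-- The induction eliminates the coordinate `ξ 0`: up to signs it is a germ of elements of `R`, and
`E` is a field over which `ξ 0` becomes a constant. -/
theorem HasPolynomialIVT.exists_forall_eval_nonneg {n : ℕ} (hR : HasPolynomialIVT R)
    (hL : HasPolynomialIVT L) (ι : R →+* L) (ξ : Fin n → L)
    (Q : Finset (MvPolynomial (Fin n) R)) :
    ∃ x : Fin n → R, ∀ q ∈ Q, 0 ≤ q.eval₂ ι ξ → 0 ≤ eval x q := by
  classical
  induction n generalizing R with
  | zero =>
    refine ⟨Fin.elim0, fun q _ hq => ?_⟩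
    rwa [Subsingleton.elim ξ (ι ∘ Fin.elim0), ← MvPolynomial.eval₂_comp, ← map_zero ι,
      (hR.strictMono ι).le_iff_le] at hq
  | succ n ih =>
    obtain ⟨U, hU⟩ := hR.exists_ultrafilter_sign_eval_eq hL ι (ξ 0)
    obtain ⟨E, _, _, _, κ, i, j, hE, hi, hj⟩ :=
      hL.exists_common_subfield hR.germ (Polynomial.eval₂RingHom ι (ξ 0)) (evalGerm U)
        fun p => (sign_evalGerm (hU p)).symm
    obtain ⟨y, hy⟩ := ih hE i (Fin.tail ξ) (Q.image (absorbFirstVariable κ))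
    choose z hz using fun k => Quot.mk_surjective (j (y k))
    let x (u : R) : Fin (n + 1) → R := Fin.cons u fun k => z k u
    have hcoord : (Fin.cons (j (κ Polynomial.X)) (j ∘ y) : Fin (n + 1) → Germ (U : Filter R) R) =
        fun k => ((fun u => x u k : R → R) : Germ (U : Filter R) R) := by
      refine funext fun k => Fin.cases ?_ (fun k => (hz k).symm) k
      exact (hj _).trans (Germ.coe_eq.2 (.of_forall fun u => by simp [x]))
    have hgerm (q) (hq : q ∈ Q) (hpos : 0 ≤ q.eval₂ ι ξ) :
        ∀ᶠ u in (U : Filter R), 0 ≤ eval (x u) q := by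
      have hyq := hy _ (Finset.mem_image_of_mem _ hq) (by
        rw [eval₂_absorbFirstVariable, ← RingHom.comp_assoc,
          show i.comp κ = Polynomial.eval₂RingHom ι (ξ 0) from RingHom.ext hi, hi]
        simpa [RingHom.comp_assoc] using hpos)
      have hjyq := (hE.strictMono j).monotone hyq
      rw [map_zero, eval₂_comp, eval₂_absorbFirstVariable, hcoord, ← RingHom.comp_assoc,
        show j.comp κ = evalGerm U from RingHom.ext hj] at hjyq
      rw [← Germ.coe_nonneg]
      exact hjyq.trans_eq (eval₂_evalGerm_comp_C (fun k u => x u k) q)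
    obtain ⟨u, hu⟩ := ((eventually_all_finset Q).2 fun q hq =>
      eventually_imp_distrib_left.2 (hgerm q hq)).exists
    exact ⟨x u, hu⟩

end ExistentialClosedness

/-! ### Real closures -/

section SumsOfSquares

open Polynomial

variable (E : Type*) [Field E] [LinearOrder E] [IsStrictOrderedRing E]

/-- The polynomials `∑ i, r i * q i ^ 2` with nonnegative constants `r i`. -/
noncomputable def weightedSumsOfSquares : Subsemiring E[X] :=
  Submonoid.subsemiringClosure
    { carrier := {w | ∃ r : E, 0 ≤ r ∧ ∃ q, w = Polynomial.C r * q ^ 2}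
      one_mem' := ⟨1, zero_le_one, 1, by simp⟩
      mul_mem' := by
        rintro _ _ ⟨r, hr, q, rfl⟩ ⟨r', hr', q', rfl⟩
        exact ⟨r * r', mul_nonneg hr hr', q * q', by rw [Polynomial.C_mul]; ring⟩ }

variable {E}

lemma C_mul_sq_mem_weightedSumsOfSquares {r : E} (hr : 0 ≤ r) (q : E[X]) :
    Polynomial.C r * q ^ 2 ∈ weightedSumsOfSquares E :=
  AddSubmonoid.subset_closure ⟨r, hr, q, rfl⟩

lemma eval_nonneg_of_mem_weightedSumsOfSquares {w : E[X]} (hw : w ∈ weightedSumsOfSquares E)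
    (x : E) : 0 ≤ w.eval x := by
  induction hw using AddSubmonoid.closure_induction with
  | mem w hw =>
    obtain ⟨r, hr, q, rfl⟩ := hw
    simpa using mul_nonneg hr (sq_nonneg (q.eval x))
  | zero => simp
  | add w w' _ _ ihw ihw' => simpa using add_nonneg ihw ihw'

lemma exists_mem_weightedSumsOfSquares_dvd_sub {f : E[X]} (hf : f.natDegree ≠ 0) {w : E[X]}
    (hw : w ∈ weightedSumsOfSquares E) :
    ∃ v ∈ weightedSumsOfSquares E, f ∣ w - v ∧ v.natDegree ≤ 2 * (f.natDegree - 1) := by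
  induction hw using AddSubmonoid.closure_induction with
  | mem w hw =>
    obtain ⟨r, hr, q, rfl⟩ := hw
    have hdeg : (q % f).natDegree ≤ f.natDegree - 1 :=
      Nat.le_sub_one_of_lt (natDegree_mod_lt q hf)
    have hdvd : f ∣ q - q % f := ⟨q / f, by linear_combination -EuclideanDomain.div_add_mod q f⟩
    refine ⟨_, C_mul_sq_mem_weightedSumsOfSquares hr (q % f), ?_, ?_⟩
    · rw [← mul_sub]
      exact (hdvd.trans (sub_dvd_pow_sub_pow q (q % f) 2)).mul_left _
    · exact (natDegree_C_mul_le _ _).trans (natDegree_pow_le_of_le 2 hdeg)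
  | zero => exact ⟨0, zero_mem _, by simp, by simp⟩
  | add w w' _ _ ihw ihw' =>
    obtain ⟨v, hv, hdvd, hdeg⟩ := ihw
    obtain ⟨v', hv', hdvd', hdeg'⟩ := ihw'
    refine ⟨v + v', add_mem hv hv', ?_, natDegree_add_le_of_degree_le hdeg hdeg'⟩
    rw [add_sub_add_comm]
    exact dvd_add hdvd hdvd'

/-- If `1 + w = f * g` with `w` reduced modulo `f`, then `g` changes sign and has smaller degree. -/
lemma not_dvd_one_add_of_eval_mul_eval_neg {f : E[X]} {a b : E} (hf : f.eval a * f.eval b < 0)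
    {w : E[X]} (hw : w ∈ weightedSumsOfSquares E) : ¬f ∣ 1 + w := by
  induction hd : f.natDegree using Nat.strong_induction_on generalizing f w with | _ d ih
  subst hd
  intro hdvd
  have hf0 : f.natDegree ≠ 0 := fun h => by
    obtain ⟨r, rfl⟩ := natDegree_eq_zero.1 h
    rw [Polynomial.eval_C, Polynomial.eval_C] at hf
    exact (mul_self_nonneg r).not_gt hf
  obtain ⟨v, hv, hwv, hdeg⟩ := exists_mem_weightedSumsOfSquares_dvd_sub hf0 hw
  obtain ⟨g, hg⟩ : f ∣ 1 + v := by
    convert dvd_sub hdvd hwv using 1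
    ring
  have hpos (x : E) : 0 < f.eval x * g.eval x := by
    rw [← Polynomial.eval_mul, ← hg, Polynomial.eval_add, Polynomial.eval_one]
    exact add_pos_of_pos_of_nonneg one_pos (eval_nonneg_of_mem_weightedSumsOfSquares hv x)
  have hg_deg : g.natDegree < f.natDegree := by
    have hfg : (f * g).natDegree ≤ 2 * (f.natDegree - 1) := by
      rw [← hg]
      exact natDegree_add_le_of_degree_le (by simp) hdeg
    rw [natDegree_mul (by rintro rfl; simp at hf) (by rintro rfl; simpa using hpos a)] at hfg
    omega
  have hg_neg : g.eval a * g.eval b < 0 := by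
    refine neg_of_mul_pos_right ?_ hf.le
    convert mul_pos (hpos a) (hpos b) using 1
    ring
  exact ih _ hg_deg hg_neg hv rfl ⟨f, by rw [hg, mul_comm]⟩

end SumsOfSquares

section RealClosure

variable {E : Type u} [Field E] [LinearOrder E] [IsStrictOrderedRing E]

lemma exists_orderedField_hom_root {f : Polynomial E} {a b : E} (hf : f.eval a * f.eval b < 0) :
    ∃ (L : Type u) (_ : Field L) (_ : LinearOrder L) (_ : IsStrictOrderedRing L) (φ : E →+* L)
      (θ : L), StrictMono φ ∧ f.eval₂ φ θ = 0 := by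
  let P : RingPreordering (AdjoinRoot f) :=
    ⟨(weightedSumsOfSquares E).map (AdjoinRoot.mk f), by
      rintro _ ⟨x, rfl⟩
      obtain ⟨q, rfl⟩ := AdjoinRoot.mk_surjective x
      exact ⟨_, C_mul_sq_mem_weightedSumsOfSquares zero_le_one q, by simp [pow_two]⟩, by
      rintro ⟨w, hw, e⟩
      refine not_dvd_one_add_of_eval_mul_eval_neg hf hw (AdjoinRoot.mk_eq_zero.1 ?_)
      rw [map_add, map_one, e, add_neg_cancel]⟩
  obtain ⟨L, field, order, ordered, φ, hφ⟩ := exists_orderedField_hom_nonneg P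
  have hmono : Monotone (φ.comp (AdjoinRoot.of f)) := (monotone_iff_map_nonneg _).2 fun r hr =>
    hφ _ ⟨_, C_mul_sq_mem_weightedSumsOfSquares hr 1, by simp⟩
  refine ⟨L, field, order, ordered, φ.comp (AdjoinRoot.of f), φ (AdjoinRoot.root f),
    hmono.strictMono_of_injective (RingHom.injective _), ?_⟩
  rw [← Polynomial.hom_eval₂, AdjoinRoot.eval₂_root, map_zero]

lemma exists_orderedField_root_hom_isAlgClosed {K : Type*} [Field K] [IsAlgClosed K] (i : E →+* K)
    {f : Polynomial E} {a b : E} (hf : f.eval a * f.eval b < 0) :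
    ∃ (G : Type u) (_ : Field G) (_ : LinearOrder G) (_ : IsStrictOrderedRing G) (κ : E →+* G)
      (ψ : G →+* K) (θ : G), StrictMono κ ∧ ψ.comp κ = i ∧ f.eval₂ κ θ = 0 := by
  obtain ⟨L, _, _, _, φ, θ, hφ, hθ⟩ := exists_orderedField_hom_root hf
  algebraize [φ, i]
  have hint : IsIntegral E θ := isAlgebraic_iff_isIntegral.1 ⟨f, by rintro rfl; simp at hf, hθ⟩
  have : Algebra.IsAlgebraic E (IntermediateField.adjoin E {θ}) :=
    IntermediateField.isAlgebraic_adjoin (by simpa using hint)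
  let ψ : IntermediateField.adjoin E {θ} →ₐ[E] K := IsAlgClosed.lift
  refine ⟨IntermediateField.adjoin E {θ}, inferInstance, inferInstance, inferInstance,
    algebraMap _ _, ψ, IntermediateField.AdjoinSimple.gen E θ, fun x y h => hφ h,
    ψ.comp_algebraMap, ?_⟩
  refine Subtype.ext ((Polynomial.hom_eval₂ f (algebraMap E _)
    (algebraMap (IntermediateField.adjoin E {θ}) L) _).trans hθ)

/-- `P` is the set of nonnegative elements of an ordered subfield of `K`. -/
structure IsSubfieldCone {K : Type*} [Field K] (P : Subsemiring K) : Prop where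
  inv_mem : ∀ a ∈ P, a⁻¹ ∈ P
  eq_zero_of_mem_of_neg_mem : ∀ a ∈ P, -a ∈ P → a = 0
  sub_mem_or_sub_mem : ∀ a ∈ P, ∀ b ∈ P, a - b ∈ P ∨ b - a ∈ P

namespace IsSubfieldCone

variable {K : Type*} [Field K] {P : Subsemiring K}

lemma map_nonneg (ψ : E →+* K) : IsSubfieldCone ((RingCone.nonneg E).toSubsemiring.map ψ) where
  inv_mem := by
    rintro _ ⟨a, ha, rfl⟩
    exact ⟨a⁻¹, inv_nonneg.2 ha, map_inv₀ ψ a⟩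
  eq_zero_of_mem_of_neg_mem := by
    rintro _ ⟨a, ha, rfl⟩ ⟨b, hb, e⟩
    obtain rfl : b = -a := ψ.injective (by rw [e, map_neg])
    rw [le_antisymm (neg_nonneg.1 hb) ha, map_zero]
  sub_mem_or_sub_mem := by
    rintro _ ⟨a, -, rfl⟩ _ ⟨b, -, rfl⟩
    exact (le_total b a).imp (fun h => ⟨a - b, sub_nonneg.2 h, map_sub ψ a b⟩)
      fun h => ⟨b - a, sub_nonneg.2 h, map_sub ψ b a⟩

lemma exists_le_maximal (hP : IsSubfieldCone P) : ∃ Q, P ≤ Q ∧ Maximal IsSubfieldCone Q := by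
  refine zorn_le_nonempty₀ {Q | IsSubfieldCone Q} (fun c hc hchain Q hQ => ?_) P hP
  have mem_sSup {x : K} : x ∈ sSup c ↔ ∃ Q ∈ c, x ∈ Q :=
    Subsemiring.mem_sSup_of_directedOn ⟨Q, hQ⟩ hchain.directedOn
  have exists_mem_mem {x y : K} (hx : x ∈ sSup c) (hy : y ∈ sSup c) : ∃ Q ∈ c, x ∈ Q ∧ y ∈ Q := by
    obtain ⟨Q, hQ, hx⟩ := mem_sSup.1 hx
    obtain ⟨Q', hQ', hy⟩ := mem_sSup.1 hy
    obtain ⟨T, hT, hQT, hQT'⟩ := hchain.directedOn Q hQ Q' hQ'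
    exact ⟨T, hT, hQT hx, hQT' hy⟩
  refine ⟨sSup c, ⟨fun a ha => ?_, fun a ha hna => ?_, fun a ha b hb => ?_⟩, fun Q => le_sSup⟩
  · obtain ⟨Q, hQ, ha⟩ := mem_sSup.1 ha
    exact mem_sSup.2 ⟨Q, hQ, (hc hQ).inv_mem a ha⟩
  · obtain ⟨Q, hQ, ha, hna⟩ := exists_mem_mem ha hna
    exact (hc hQ).eq_zero_of_mem_of_neg_mem a ha hna
  · obtain ⟨Q, hQ, ha, hb⟩ := exists_mem_mem ha hb
    exact ((hc hQ).sub_mem_or_sub_mem a ha b hb).imp (fun h => mem_sSup.2 ⟨Q, hQ, h⟩)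
      fun h => mem_sSup.2 ⟨Q, hQ, h⟩

/-- The ordered subfield with cone `P` of nonnegative elements. -/
def subfield (hP : IsSubfieldCone P) : Subfield K where
  carrier := {x | x ∈ P ∨ -x ∈ P}
  zero_mem' := Or.inl (zero_mem P)
  one_mem' := Or.inl (one_mem P)
  neg_mem' := by
    rintro x (hx | hx)
    · exact Or.inr (by rwa [neg_neg])
    · exact Or.inl hx
  add_mem' := by
    rintro x y (hx | hx) (hy | hy)
    · exact Or.inl (add_mem hx hy)
    · simpa [sub_eq_add_neg, add_comm] using hP.sub_mem_or_sub_mem _ hx _ hy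
    · simpa [sub_eq_add_neg, add_comm] using hP.sub_mem_or_sub_mem _ hy _ hx
    · exact Or.inr (by simpa [add_comm] using add_mem hx hy)
  mul_mem' := by
    rintro x y (hx | hx) (hy | hy)
    · exact Or.inl (mul_mem hx hy)
    · exact Or.inr (by simpa using mul_mem hx hy)
    · exact Or.inr (by simpa using mul_mem hx hy)
    · exact Or.inl (by simpa using mul_mem hx hy)
  inv_mem' := by
    rintro x (hx | hx)
    · exact Or.inl (hP.inv_mem _ hx)
    · exact Or.inr (by simpa [inv_neg] using hP.inv_mem _ hx)

lemma exists_linearOrder_subfield (hP : IsSubfieldCone P) :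
    ∃ (_ : LinearOrder hP.subfield) (_ : IsStrictOrderedRing hP.subfield),
      ∀ x : hP.subfield, 0 ≤ x ↔ (x : K) ∈ P := by
  let S : RingCone hP.subfield :=
    { P.comap hP.subfield.subtype with
      eq_zero_of_mem_of_neg_mem' := fun {x} hx hnx =>
        Subtype.ext (hP.eq_zero_of_mem_of_neg_mem x hx hnx) }
  have : HasMemOrNegMem S := ⟨fun x => x.2⟩
  exact exists_linearOrder_of_ringCone S

lemma exists_isRoot_of_maximal [IsAlgClosed K] (hP : Maximal IsSubfieldCone P) (i : E →+* K)
    (hi : (RingCone.nonneg E).toSubsemiring.map i = P) {f : Polynomial E} {a b : E}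
    (hf : f.eval a * f.eval b < 0) : ∃ c, f.IsRoot c := by
  obtain ⟨G, _, _, _, κ, ψ, θ, hκ, hψ, hθ⟩ := exists_orderedField_root_hom_isAlgClosed i hf
  have hle : P ≤ (RingCone.nonneg G).toSubsemiring.map ψ := by
    rw [← hi, ← hψ]
    rintro _ ⟨x, hx, rfl⟩
    exact ⟨κ x, (map_zero κ).symm.le.trans (hκ.monotone hx), rfl⟩
  have hge : (RingCone.nonneg G).toSubsemiring.map ψ ≤ (RingCone.nonneg E).toSubsemiring.map i :=
    hi ▸ hP.le_of_ge (map_nonneg ψ) hle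
  obtain ⟨c, hc⟩ : ψ θ ∈ i.range := by
    rcases le_total 0 θ with h | h
    · obtain ⟨c, -, hc⟩ := hge ⟨θ, h, rfl⟩
      exact ⟨c, hc⟩
    · obtain ⟨c, -, hc⟩ := hge ⟨-θ, neg_nonneg.2 h, rfl⟩
      exact ⟨-c, by rw [map_neg, hc, map_neg, neg_neg]⟩
  obtain rfl : κ c = θ := ψ.injective (by rw [← hc, ← hψ, RingHom.comp_apply])
  exact ⟨c, by rwa [Polynomial.eval₂_hom, map_eq_zero] at hθ⟩

end IsSubfieldCone

theorem exists_strictMono_hasPolynomialIVT (F : Type u) [Field F] [LinearOrder F]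
    [IsStrictOrderedRing F] :
    ∃ (L : Type u) (_ : Field L) (_ : LinearOrder L) (_ : IsStrictOrderedRing L) (ι : F →+* L),
      StrictMono ι ∧ HasPolynomialIVT L := by
  let i := algebraMap F (AlgebraicClosure F)
  obtain ⟨P, hle, hP⟩ := (IsSubfieldCone.map_nonneg i).exists_le_maximal
  obtain ⟨order, ordered, hnonneg⟩ := hP.prop.exists_linearOrder_subfield
  have hi (x : F) : i x ∈ hP.prop.subfield :=
    (le_total 0 x).imp (fun h => hle ⟨x, h, rfl⟩)
      fun h => hle ⟨-x, neg_nonneg.2 h, map_neg i x⟩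
  have hmono : Monotone (i.codRestrict hP.prop.subfield hi) :=
    (monotone_iff_map_nonneg _).2 fun x hx => (hnonneg _).2 (hle ⟨x, hx, rfl⟩)
  have hmap : (RingCone.nonneg hP.prop.subfield).toSubsemiring.map hP.prop.subfield.subtype = P :=
    le_antisymm (Subsemiring.map_le_iff_le_comap.2 fun y => (hnonneg y).1)
      fun x hx => ⟨⟨x, Or.inl hx⟩, (hnonneg _).2 hx, rfl⟩
  exact ⟨hP.prop.subfield, inferInstance, order, ordered, i.codRestrict hP.prop.subfield hi,
    hmono.strictMono_of_injective (RingHom.injective _),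
    .of_exists_root fun f a b => IsSubfieldCone.exists_isRoot_of_maximal hP _ hmap⟩

end RealClosure

/-! ### Putinar's theorem -/

lemma HasPolynomialIVT.neg_one_mem_of_forall_exists_eval_neg {R : Type u} [Field R] [LinearOrder R]
    [IsStrictOrderedRing R] (hR : HasPolynomialIVT R) {n : ℕ}
    {T : Subsemiring (MvPolynomial (Fin n) R)} (hT : ∀ {q}, IsSquare q → q ∈ T)
    (Q : Finset (MvPolynomial (Fin n) R)) (hQT : ∀ q ∈ Q, q ∈ T)
    (hQ : ∀ x : Fin n → R, ∃ q ∈ Q, eval x q < 0) : -1 ∈ T := by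
  by_contra hneg
  obtain ⟨F, _, _, _, φ, hφ⟩ := exists_orderedField_hom_nonneg ⟨T, hT, hneg⟩
  obtain ⟨L, _, _, _, ι, hι, hL⟩ := exists_strictMono_hasPolynomialIVT F
  obtain ⟨x, hx⟩ := hR.exists_forall_eval_nonneg hL ((ι.comp φ).comp C)
    (fun i => (ι.comp φ) (X i)) Q
  obtain ⟨q, hq, hneg⟩ := hQ x
  refine hneg.not_ge (hx q hq ?_)
  rw [← map_mvPolynomial_eq_eval₂]
  simpa using hι.monotone (hφ q (hQT q hq))

namespace QuadraticModule

/-- A subsemiring that contains the squares, viewed as a quadratic module. -/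
def ofSubsemiring {A : Type*} [CommRing A] (T : Subsemiring A) (hT : ∀ {x}, IsSquare x → x ∈ T) :
    QuadraticModule A where
  __ := T.toAddSubmonoid
  one_mem' := one_mem T
  sq_mul_mem' a _ hm := mul_mem (hT (.sq a)) hm

/-- Wörmann's trick: multiplication by `1 + q` maps `T + T (N - g)` into `T`, and
`(1 + q) (k - q) ∈ T` still bounds `q` modulo `T`. -/
lemma exists_algebraMap_sub_mem_of_neg_one_mem {A : Type*} [CommRing A] [Algebra ℝ A]
    {T : Subsemiring A} (hT : ∀ {x}, IsSquare x → x ∈ T) {g : A} (hg : g ∈ T) {N : ℝ} (hN : 0 ≤ N)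
    (hneg : -1 ∈ preorderingAdjoin T hT (g - algebraMap ℝ A N))
    (hA : (ofSubsemiring (preorderingAdjoin T hT (algebraMap ℝ A N - g))
      fun hx => le_preorderingAdjoin hT _ (hT hx)).IsArchimedean) :
    ∃ N' : ℝ, algebraMap ℝ A N' - g ∈ T := by
  obtain ⟨q, hq, t, ht, e⟩ := hneg
  obtain ⟨k, -, ⟨a, ha, b, hb, ek⟩, -⟩ := hA.exists_absLE q
  have hf : (1 + q) * (algebraMap ℝ A N - g) ∈ T := by
    have : (1 + q) * (algebraMap ℝ A N - g) = t * (algebraMap ℝ A N - g) ^ 2 := by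
      linear_combination -(algebraMap ℝ A N - g) * e
    rw [this]
    exact mul_mem ht (hT (.sq _))
  have hk : (1 + q) * (algebraMap ℝ A k - q) ∈ T := by
    rw [ek, mul_add, mul_left_comm]
    exact add_mem (mul_mem (add_mem (one_mem T) hq) ha) (mul_mem hb hf)
  have hq_le : algebraMap ℝ A (k + k ^ 2 / 4) - q ∈ T := by
    convert add_mem hk (hT (.sq (q - algebraMap ℝ A (k / 2)))) using 1
    have half : algebraMap ℝ A k = 2 * algebraMap ℝ A (k / 2) := by
      rw [← map_ofNat (algebraMap ℝ A) 2, ← map_mul, mul_div_cancel₀ k two_ne_zero]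
    rw [show k ^ 2 / 4 = (k / 2) ^ 2 by ring, map_add, map_pow]
    linear_combination -q * half
  refine ⟨N + N * (k + k ^ 2 / 4), ?_⟩
  convert add_mem (add_mem hf (mul_mem hq hg))
    (algebraMap_mul_mem (M := ofSubsemiring T hT) hN hq_le) using 1
  rw [map_add, map_mul]
  ring

end QuadraticModule

lemma exists_C_sub_sum_sq_mem_of_isCompact {n : ℕ} {T : Subsemiring (MvPolynomial (Fin n) ℝ)}
    (hT : ∀ {x}, IsSquare x → x ∈ T) {μ : MvPolynomial (Fin n) ℝ} (hμT : μ ∈ T)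
    (hμ : IsCompact {x : Fin n → ℝ | 0 ≤ eval x μ}) :
    ∃ N : ℝ, C N - ∑ i, X i ^ 2 ∈ T := by
  classical
  let g : MvPolynomial (Fin n) ℝ := ∑ i, X i ^ 2
  obtain ⟨B, hB⟩ := hμ.bddAbove_image (continuous_eval g).continuousOn
  let N := max B 0 + 1
  have hN : 0 ≤ N := by positivity
  have hempty (x : Fin n → ℝ) : ∃ q ∈ ({μ, g - C N} : Finset _), eval x q < 0 := by
    by_contra! h
    have hgB : eval x g ≤ B := hB ⟨x, h μ (by simp), rfl⟩
    have hNg : 0 ≤ eval x (g - C N) := h _ (by simp)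
    rw [eval_sub, eval_C] at hNg
    linarith [le_max_left B 0]
  have hle := le_preorderingAdjoin hT (g - C N)
  refine QuadraticModule.exists_algebraMap_sub_mem_of_neg_one_mem hT
    (sum_mem fun i _ => hT (.sq _)) hN ?_ (QuadraticModule.isArchimedean_of_sub_sum_sq_mem
      (mem_preorderingAdjoin_self hT (C N - g)))
  refine HasPolynomialIVT.real.neg_one_mem_of_forall_exists_eval_neg
    (fun hx => hle (hT hx)) _ (fun q hq => ?_) hempty
  obtain rfl | rfl : q = μ ∨ q = g - C N := by simpa using hq
  · exact hle hμT
  · exact mem_preorderingAdjoin_self hT _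

lemma QuadraticModule.isArchimedean_of_isCompact {n : ℕ}
    {M : QuadraticModule (MvPolynomial (Fin n) ℝ)} {μ : MvPolynomial (Fin n) ℝ} (hμM : μ ∈ M)
    (hμ : IsCompact {x : Fin n → ℝ | 0 ≤ eval x μ}) : M.IsArchimedean := by
  have hsq {x : MvPolynomial (Fin n) ℝ} (hx : IsSquare x) : x ∈ Subsemiring.sumSq _ :=
    Subsemiring.mem_sumSq.2 hx.isSumSq
  obtain ⟨N, a, ha, b, hb, e⟩ := exists_C_sub_sum_sq_mem_of_isCompact
    (fun hx => le_preorderingAdjoin hsq μ (hsq hx)) (mem_preorderingAdjoin_self hsq μ) hμ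
  refine isArchimedean_of_sub_sum_sq_mem (N := N) ?_
  rw [e]
  exact add_mem (M.mem_of_isSumSq (Subsemiring.mem_sumSq.1 ha))
    (mul_mem_of_isSumSq (Subsemiring.mem_sumSq.1 hb) hμM)

lemma algHom_apply_eq_eval {σ R : Type*} [CommSemiring R] (φ : MvPolynomial σ R →ₐ[R] R)
    (q : MvPolynomial σ R) : φ q = eval (fun i => φ (X i)) q := by
  rw [← aeval_eq_eval]
  exact DFunLike.congr_fun (aeval_unique φ) q

lemma isSOS_iff_isSumSq {n : ℕ} {p : MvPolynomial (Fin n) ℝ} : IsSOS p ↔ IsSumSq p := by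
  refine ⟨?_, fun hp => ?_⟩
  · rintro ⟨s, h, rfl⟩
    exact .sum_sq _ _
  · induction hp with
    | zero => exact ⟨0, Fin.elim0, by simp⟩
    | sq_add a _ ih =>
      obtain ⟨s, h, rfl⟩ := ih
      exact ⟨s + 1, Fin.cons a h, by simp [Fin.sum_univ_succ, pow_two]⟩

/-- **Putinar's Positivstellensatz (Theorem 2 of the paper).**
Let `k₁, …, kₘ` be real polynomials in `n` variables (with `k₀ = 1`) such that
`𝒦 = {x : kⱼ(x) ≥ 0 ∀ j}` is compact, and suppose there are SOS polynomials
`σ₀, …, σₘ` such that `μ = σ₀ + Σⱼ σⱼ kⱼ` has compact superlevel set `{μ ≥ 0}`.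
Then every polynomial `p` that is strictly positive on `𝒦` admits a representation
`p = σ̃₀ + Σⱼ σ̃ⱼ kⱼ` with `σ̃₀, …, σ̃ₘ` sums of squares. -/
theorem putinar_positivstellensatz
    {n m : ℕ}
    (k : Fin m → MvPolynomial (Fin n) ℝ)
    (hK : IsCompact {x : Fin n → ℝ | ∀ j, 0 ≤ eval x (k j)})
    (σ₀ : MvPolynomial (Fin n) ℝ) (σ : Fin m → MvPolynomial (Fin n) ℝ)
    (hσ₀ : IsSOS σ₀) (hσ : ∀ j, IsSOS (σ j))
    (hμ : IsCompact {x : Fin n → ℝ | 0 ≤ eval x (σ₀ + ∑ j, σ j * k j)})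
    (p : MvPolynomial (Fin n) ℝ)
    (hp : ∀ x : Fin n → ℝ, (∀ j, 0 ≤ eval x (k j)) → 0 < eval x p) :
    ∃ (τ₀ : MvPolynomial (Fin n) ℝ) (τ : Fin m → MvPolynomial (Fin n) ℝ),
      IsSOS τ₀ ∧ (∀ j, IsSOS (τ j)) ∧ p = τ₀ + ∑ j, τ j * k j := by
  let M := QuadraticModule.span k
  have hμM : σ₀ + ∑ j, σ j * k j ∈ M :=
    ⟨σ₀, σ, isSOS_iff_isSumSq.1 hσ₀, fun j => isSOS_iff_isSumSq.1 (hσ j), rfl⟩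
  have hM : M.IsArchimedean := QuadraticModule.isArchimedean_of_isCompact hμM hμ
  have hpM : p ∈ M := QuadraticModule.mem_of_forall_algHom_pos hM fun φ hφ => by
    rw [algHom_apply_eq_eval]
    refine hp _ fun j => ?_
    rw [← algHom_apply_eq_eval]
    exact hφ _ (QuadraticModule.mem_span_self k j)
  obtain ⟨τ₀, τ, hτ₀, hτ, rfl⟩ := hpM
  exact ⟨τ₀, τ, isSOS_iff_isSumSq.2 hτ₀, fun j => isSOS_iff_isSumSq.2 (hτ j), rfl⟩
end
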